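/- arXiv:2503.12766 — 11 statements merged into one kernel-verified Lean document; each statement's English description precedes it below -/
import Mathlib

section
/- Let P and Q be posets. If the product space ΣP × ΣQ (the product of P and Q each equipped with the Scott topology) is a Fréchet space, then the Scott topology on the product poset P × Q coincides with the product topology of ΣP and ΣQ. -/
open Topology Set Filter

/-- A topology is the Scott topology as soon as its open sets are exactly the upper sets that are
inaccessible by directed suprema. -/
theorem isScott_univ_of_isOpen_iff {α : Type*} [Preorder α] [TopologicalSpace α]
    (h : ∀ s : Set α, IsOpen s ↔ IsUpperSet s ∧ DirSupInacc s) : IsScott α univ where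
  topology_eq_scott := by
    refine TopologicalSpace.ext_iff.2 fun s => (h s).trans ?_
    rw [@IsScott.isOpen_iff_isUpperSet_and_dirSupInaccOn α univ _ (scott α univ) s
      (@IsScott.mk α univ _ (scott α univ) rfl),
      dirSupInaccOn_univ]

theorem isOpen_iff_isUpperSet_and_dirSupInacc {α : Type*} [Preorder α] [TopologicalSpace α]
    [IsScott α univ] {s : Set α} : IsOpen s ↔ IsUpperSet s ∧ DirSupInacc s := by
  rw [IsScott.isOpen_iff_isUpperSet_and_dirSupInaccOn (D := univ), dirSupInaccOn_univ]

section Prod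

variable {P Q : Type*} [Preorder P] [Preorder Q]

theorem isLUB_prodMk_right {d : Set Q} (hd : d.Nonempty) {b : Q} (hb : IsLUB d b) (p : P) :
    IsLUB (Prod.mk p '' d) (p, b) := by
  rw [isLUB_prod, image_image, image_image, image_id', hd.image_const]
  exact ⟨isLUB_singleton, hb⟩

theorem isLUB_prodMk_left {d : Set P} (hd : d.Nonempty) {a : P} (ha : IsLUB d a) (q : Q) :
    IsLUB ((·, q) '' d) (a, q) := by
  rw [isLUB_prod, image_image, image_image, image_id', hd.image_const]
  exact ⟨ha, isLUB_singleton⟩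

theorem DirSupInacc.preimage_prodMk_right {U : Set (P × Q)} (hU : DirSupInacc U) (p : P) :
    DirSupInacc (Prod.mk p ⁻¹' U) := by
  intro d hd hdir b hb hbU
  obtain ⟨_, ⟨e, he, rfl⟩, heU⟩ := hU (hd.image _)
    (directedOn_image.2 (hdir.mono fun _ _ h => Prod.mk_le_mk.2 ⟨le_rfl, h⟩))
    (isLUB_prodMk_right hd hb p) hbU
  exact ⟨e, he, heU⟩

theorem DirSupInacc.preimage_prodMk_left {U : Set (P × Q)} (hU : DirSupInacc U) (q : Q) :
    DirSupInacc ((·, q) ⁻¹' U) := by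
  intro d hd hdir a ha haU
  obtain ⟨_, ⟨e, he, rfl⟩, heU⟩ := hU (hd.image _)
    (directedOn_image.2 (hdir.mono fun _ _ h => Prod.mk_le_mk.2 ⟨h, le_rfl⟩))
    (isLUB_prodMk_left hd ha q) haU
  exact ⟨e, he, heU⟩

variable [TopologicalSpace P] [IsScott P univ] [TopologicalSpace Q] [IsScott Q univ]

/-- Open sets of the product of two Scott topologies are Scott open. -/
theorem IsOpen.isUpperSet_and_dirSupInacc_prod {U : Set (P × Q)} (hU : IsOpen U) :
    IsUpperSet U ∧ DirSupInacc U := by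
  rw [isOpen_prod_iff] at hU
  constructor
  · rintro ⟨a, b⟩ ⟨a', b'⟩ hle hab
    obtain ⟨u, v, hu, hv, hau, hbv, huv⟩ := hU a b hab
    exact huv ⟨IsScott.isUpperSet_of_isOpen (D := univ) hu hle.1 hau,
      IsScott.isUpperSet_of_isOpen (D := univ) hv hle.2 hbv⟩
  · rintro d hd hdir ⟨a, b⟩ hlub hab
    obtain ⟨u, v, hu, hv, hau, hbv, huv⟩ := hU a b hab
    rw [isOpen_iff_isUpperSet_and_dirSupInacc] at hu hv
    rw [isLUB_prod] at hlub
    obtain ⟨_, ⟨e, he, rfl⟩, heu⟩ := hu.2 (hd.image _) hdir.fst hlub.1 hau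
    obtain ⟨_, ⟨f, hf, rfl⟩, hfv⟩ := hv.2 (hd.image _) hdir.snd hlub.2 hbv
    obtain ⟨g, hg, heg, hfg⟩ := hdir e he f hf
    exact ⟨g, hg, huv ⟨hu.1 heg.1 heu, hv.1 hfg.2 hfv⟩⟩

/-- If `U` is Scott open in `P × Q` and `K` is compact in `Q`, then the points `p` whose whole fibre
over `K` lies in `U` form a Scott open set. -/
theorem isOpen_setOf_subset_preimage_prodMk {U : Set (P × Q)} (hup : IsUpperSet U)
    (hU : DirSupInacc U) {K : Set Q} (hK : IsCompact K) : IsOpen {p | K ⊆ Prod.mk p ⁻¹' U} := by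
  have mono : ∀ {p p' : P}, p ≤ p' → Prod.mk p ⁻¹' U ⊆ Prod.mk p' ⁻¹' U :=
    fun h q hq => hup (Prod.mk_le_mk.2 ⟨h, le_refl q⟩) hq
  refine isOpen_iff_isUpperSet_and_dirSupInacc.2 ⟨fun p p' h hp => hp.trans (mono h), ?_⟩
  intro d hd hdir a ha haK
  have : Nonempty d := hd.to_subtype
  obtain ⟨⟨e, he⟩, heK⟩ := hK.elim_directed_cover (fun e : d => Prod.mk (e : P) ⁻¹' U)
    (fun e => isOpen_iff_isUpperSet_and_dirSupInacc.2
      ⟨fun _ _ h hq => hup (Prod.mk_le_mk.2 ⟨le_rfl, h⟩) hq, hU.preimage_prodMk_right _⟩)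
    (fun q hq => by
      obtain ⟨e, he, heU⟩ := hU.preimage_prodMk_left q hd hdir ha (haK hq)
      exact mem_iUnion.2 ⟨⟨e, he⟩, heU⟩)
    (Directed.mono_comp (· ≤ ·) (g := fun p : P => Prod.mk p ⁻¹' U) (fun _ _ h => mono h)
      hdir.directed_val)
  exact ⟨e, he, heK⟩

/-- A Scott open set of `P × Q` eventually contains every sequence converging, in the product of the
Scott topologies, to one of its points. -/
theorem eventually_mem_of_tendsto_prod {U : Set (P × Q)} (hup : IsUpperSet U)
    (hU : DirSupInacc U) {s : ℕ → P × Q} {x : P × Q} (hx : x ∈ U)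
    (hs : Tendsto s atTop (𝓝 x)) : ∀ᶠ n in atTop, s n ∈ U := by
  have h₁ : Tendsto (fun n => (s n).1) atTop (𝓝 x.1) := hs.fst_nhds
  have h₂ : Tendsto (fun n => (s n).2) atTop (𝓝 x.2) := hs.snd_nhds
  have hslice : IsOpen (Prod.mk x.1 ⁻¹' U) := isOpen_iff_isUpperSet_and_dirSupInacc.2
    ⟨fun _ _ h hq => hup (Prod.mk_le_mk.2 ⟨le_rfl, h⟩) hq, hU.preimage_prodMk_right _⟩
  obtain ⟨N, hN⟩ := eventually_atTop.1 (h₂.eventually (hslice.mem_nhds hx))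
  have hK := (h₂.comp (tendsto_add_atTop_nat N)).isCompact_insert_range
  have hxK : insert x.2 (range ((fun n => (s n).2) ∘ (· + N))) ⊆ Prod.mk x.1 ⁻¹' U :=
    insert_subset hx (range_subset_iff.2 fun n => hN _ (Nat.le_add_left N n))
  filter_upwards [h₁.eventually ((isOpen_setOf_subset_preimage_prodMk hup hU hK).mem_nhds hxK),
    eventually_ge_atTop N] with n hn hNn
  exact hn (mem_insert_of_mem _ ⟨n - N, by simp [Nat.sub_add_cancel hNn]⟩)

end Prod

/-- Let P and Q be posets. If the product space ΣP × ΣQ (the product of P and Q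
each equipped with the Scott topology) is a Fréchet space, then the Scott topology on the
product poset P × Q coincides with the product topology of ΣP and ΣQ. -/
theorem stmt0 {P Q : Type*} [PartialOrder P] [PartialOrder Q]
    [TopologicalSpace P] [Topology.IsScott P Set.univ]
    [TopologicalSpace Q] [Topology.IsScott Q Set.univ]
    [FrechetUrysohnSpace (P × Q)] :
    Topology.IsScott (P × Q) Set.univ := by
  refine isScott_univ_of_isOpen_iff fun U =>
    ⟨fun hU => hU.isUpperSet_and_dirSupInacc_prod, fun ⟨hup, hU⟩ => ?_⟩
  rw [← isClosed_compl_iff, ← closure_subset_iff_isClosed]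
  intro x hx hxU
  obtain ⟨s, hsU, hs⟩ := mem_closure_iff_seq_limit.1 hx
  obtain ⟨n, hn⟩ := (eventually_mem_of_tendsto_prod hup hU hxU hs).exists
  exact hsU n hn
end

section
/- Let P be a poset such that the product space ΣP × ΣP is a Fréchet space. If the Lawson space ΛP is compact, then ΣP is sober. -/
open Set Filter Topology

/-- The lower closure of a compact set is closed under existing directed suprema, provided that
principal filters are closed. -/
theorem IsCompact.dirSupClosed_lowerClosure {Q : Type*} [Preorder Q] [TopologicalSpace Q]
    [ClosedIciTopology Q] {K : Set Q} (hK : IsCompact K) :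
    DirSupClosed (lowerClosure K : Set Q) := by
  intro d hd hne hdir a ha
  have : Nonempty d := hne.to_subtype
  suffices h : (K ∩ ⋂ b : d, Ici (b : Q)).Nonempty by
    obtain ⟨k, hkK, hk⟩ := h
    exact ⟨k, hkK, ha.2 fun b hb ↦ mem_iInter.1 hk ⟨b, hb⟩⟩
  by_contra hempty
  obtain ⟨b, hb⟩ := hK.elim_directed_family_closed (fun b : d ↦ Ici (b : Q))
    (fun _ ↦ isClosed_Ici) (not_nonempty_iff_eq_empty.1 hempty) fun b c ↦ by
      obtain ⟨e, he, hbe, hce⟩ := hdir b b.2 c c.2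
      exact ⟨⟨e, he⟩, Ici_subset_Ici.2 hbe, Ici_subset_Ici.2 hce⟩
  obtain ⟨k, hkK, hbk⟩ := hd b.2
  exact hb.subset ⟨hkK, hbk⟩

/-- In a compact space with closed principal ideals and filters, directed suprema exist. -/
theorem DirectedOn.exists_isLUB_of_compactSpace {Q : Type*} [Preorder Q] [TopologicalSpace Q]
    [CompactSpace Q] [ClosedIciTopology Q] [ClosedIicTopology Q] {d : Set Q}
    (hne : d.Nonempty) (hdir : DirectedOn (· ≤ ·) d) : ∃ a, IsLUB d a := by
  have : Nonempty d := hne.to_subtype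
  obtain ⟨a, ha⟩ := IsCompact.nonempty_iInter_of_directed_nonempty_isCompact_isClosed
    (fun b : d ↦ Ici (b : Q) ∩ ⋂ u ∈ upperBounds d, Iic u)
    (fun b c ↦ by
      obtain ⟨e, he, hbe, hce⟩ := hdir b b.2 c c.2
      exact ⟨⟨e, he⟩, inter_subset_inter_left _ (Ici_subset_Ici.2 hbe),
        inter_subset_inter_left _ (Ici_subset_Ici.2 hce)⟩)
    (fun b ↦ ⟨b, le_rfl, mem_iInter₂.2 fun u hu ↦ hu b.2⟩)
    (fun b ↦ (isClosed_Ici.inter (isClosed_biInter fun _ _ ↦ isClosed_Iic)).isCompact)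
    (fun b ↦ isClosed_Ici.inter (isClosed_biInter fun _ _ ↦ isClosed_Iic))
  rw [mem_iInter] at ha
  exact ⟨a, fun b hb ↦ (ha ⟨b, hb⟩).1,
    fun u hu ↦ mem_iInter₂.1 (ha (Classical.arbitrary d)).2 u hu⟩

section TwoTopologies

variable {P : Type*} [PartialOrder P] {L : TopologicalSpace P} [S : TopologicalSpace P]
  [Topology.IsScott P univ]

theorem isClosed_lowerClosure_of_isCompact (hIci : @ClosedIciTopology P L _) {K : Set P}
    (hK : @IsCompact P L K) : IsClosed (lowerClosure K : Set P) :=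
  Topology.IsScott.isClosed_iff_isLowerSet_and_dirSupClosed.2
    ⟨(lowerClosure K).lower, @IsCompact.dirSupClosed_lowerClosure P _ L hIci K hK⟩

/-- If `a` converges to `x` in a topology with closed principal filters and to `y` in the Scott
topology, then `y ≤ x`. -/
theorem le_of_tendsto_of_tendsto_scott (hIci : @ClosedIciTopology P L _) {a : ℕ → P} {x y : P}
    (hx : Tendsto a atTop (@nhds P L x)) (hy : Tendsto a atTop (𝓝 y)) : y ≤ x := by
  by_contra hyx
  have hev : ∀ᶠ n in atTop, a n ∈ (Ici y)ᶜ :=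
    hx (@IsOpen.mem_nhds P L x _ (@IsClosed.isOpen_compl P L _ (@isClosed_Ici P L _ hIci y)) hyx)
  obtain ⟨N, hN⟩ := eventually_atTop.1 hev
  have hK := @Tendsto.isCompact_insert_range P L (fun n ↦ a (n + N)) x
    (hx.comp (tendsto_add_atTop_nat N))
  obtain ⟨k, hk, hyk⟩ := (isClosed_lowerClosure_of_isCompact hIci hK).mem_of_tendsto
    (hy.comp (tendsto_add_atTop_nat N))
    (Eventually.of_forall fun n ↦ subset_lowerClosure (mem_insert_of_mem _ ⟨n, rfl⟩))
  rcases hk with rfl | ⟨n, rfl⟩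
  · exact hyx hyk
  · exact hN (n + N) (Nat.le_add_left N n) hyk

/-- A frequently visited set has, in the compact topology `L`, a cluster point above any Scott
limit. -/
theorem exists_ge_forall_mem_closure (hL : @CompactSpace P L) (hIci : @ClosedIciTopology P L _)
    {a : ℕ → P} {x : P} (hx : Tendsto a atTop (𝓝 x)) {O : Set P}
    (hO : ∃ᶠ n in atTop, a n ∈ O) :
    ∃ z, x ≤ z ∧ ∀ N, z ∈ @closure P L (a '' Ici N ∩ O) := by
  have hcl : ∀ N, IsClosed[L] (Ici x ∩ @closure P L (a '' Ici N ∩ O)) := fun N ↦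
    @IsClosed.inter P _ _ L (@isClosed_Ici P L _ hIci x) (@isClosed_closure P L _)
  obtain ⟨z, hz⟩ := @IsCompact.nonempty_iInter_of_sequence_nonempty_isCompact_isClosed P L
    (fun N ↦ Ici x ∩ @closure P L (a '' Ici N ∩ O))
    (fun N ↦ inter_subset_inter_right _ (@closure_mono P L _ _
      (inter_subset_inter_left _ (image_mono (Ici_subset_Ici.2 N.le_succ)))))
    (fun N ↦ by
      have hK : @IsCompact P L (@closure P L (a '' Ici N ∩ O)) :=
        @IsClosed.isCompact P L _ hL (@isClosed_closure P L _)
      obtain ⟨k, hk, hxk⟩ :=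
        (isClosed_lowerClosure_of_isCompact hIci hK).mem_of_frequently_of_tendsto
          ((hO.and_eventually (eventually_ge_atTop N)).mono fun n hn ↦ subset_lowerClosure
            (@subset_closure P L _ _ ⟨⟨n, hn.2, rfl⟩, hn.1⟩)) hx
      exact ⟨k, hxk, hk⟩)
    (@IsClosed.isCompact P L _ hL (hcl 0)) hcl
  rw [mem_iInter] at hz
  exact ⟨z, (hz 0).1, fun N ↦ (hz N).2⟩

/-- An irreducible Scott-closed set is directed. -/
theorem IsIrreducible.directedOn_of_isClosed_scott [FrechetUrysohnSpace (P × P)]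
    (hL : @CompactSpace P L) (hLS : L ≤ S) (hIci : @ClosedIciTopology P L _)
    {F : Set P} (hF : IsIrreducible F) (hFc : IsClosed F) : DirectedOn (· ≤ ·) F := by
  intro x₀ hx₀ y hy
  set T : Set (P × P) := closure ((fun p ↦ (p, p)) '' F)
  have hTF : T ⊆ F ×ˢ F :=
    closure_minimal (by rintro _ ⟨p, hp, rfl⟩; exact ⟨hp, hp⟩) (hFc.prod hFc)
  have hmem : (x₀, y) ∈ T := by
    refine mem_closure_iff.2 fun U hU hxy ↦ ?_
    obtain ⟨V, W, hV, hW, hxV, hyW, hVW⟩ := isOpen_prod_iff.1 hU x₀ y hxy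
    obtain ⟨p, hpF, hpV, hpW⟩ := hF.2 V W hV hW ⟨x₀, hx₀, hxV⟩ ⟨y, hy, hyW⟩
    exact ⟨(p, p), hVW ⟨hpV, hpW⟩, p, hpF, rfl⟩
  have hsec : IsClosed {x | (x, y) ∈ T} :=
    isClosed_closure.preimage (Continuous.prodMk_left y)
  have hIic : @ClosedIicTopology P L _ :=
    @ClosedIicTopology.mk P L _ fun u ↦ (isClosed_Iic (a := u)).mono hLS
  obtain ⟨x, hx₀x, hmax⟩ := zorn_le_nonempty₀ {x | (x, y) ∈ T} (fun c hc hchain b hb ↦ by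
    obtain ⟨s, hs⟩ := @DirectedOn.exists_isLUB_of_compactSpace P _ L hL hIci hIic c ⟨b, hb⟩
      hchain.directedOn
    exact ⟨s, Topology.IsScott.dirSupClosed_of_isClosed hsec hc ⟨b, hb⟩ hchain.directedOn hs,
      fun _ h ↦ hs.1 h⟩) x₀ hmem
  obtain ⟨q, hqF, hq⟩ := mem_closure_iff_seq_limit.1 hmax.prop
  choose a haF haq using hqF
  have hax : Tendsto a atTop (𝓝 x) := by
    simpa [Function.comp_def, ← haq] using (continuous_fst.tendsto (x, y)).comp hq
  have hay : Tendsto a atTop (𝓝 y) := by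
    simpa [Function.comp_def, ← haq] using (continuous_snd.tendsto (x, y)).comp hq
  have haL : Tendsto a atTop (@nhds P L x) := by
    refine (@tendsto_nhds P L _ _ _ _).2 fun O hO hxO ↦ ?_
    by_contra hcon
    obtain ⟨z, hxz, hz⟩ := exists_ge_forall_mem_closure hL hIci hax (O := Oᶜ)
      (not_eventually.1 hcon)
    have hzT : (z, y) ∈ T := by
      refine mem_closure_iff.2 fun U hU hzy ↦ ?_
      obtain ⟨V, W, hV, hW, hzV, hyW, hVW⟩ := isOpen_prod_iff.1 hU z y hzy
      obtain ⟨N, hN⟩ := eventually_atTop.1 (hay (hW.mem_nhds hyW))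
      obtain ⟨_, hpV, ⟨n, hn, rfl⟩, -⟩ := (@mem_closure_iff P L _ _).1 (hz N) V (hLS V hV) hzV
      exact ⟨(a n, a n), hVW ⟨hpV, hN n hn⟩, a n, haF n, rfl⟩
    have hzx : z = x := (hmax.eq_of_le hzT hxz).symm
    have hxOc : x ∈ Oᶜ := @closure_minimal P L _ _ inter_subset_right
      (@IsOpen.isClosed_compl P L _ hO) _ (hzx ▸ hz 0)
    exact hxOc hxO
  exact ⟨x, (hTF hmax.prop).1, hx₀x, le_of_tendsto_of_tendsto_scott hIci haL hay⟩

end TwoTopologies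

/-- Let P be a poset such that the product space ΣP × ΣP is a Fréchet space.
If the Lawson space ΛP is compact, then ΣP is sober. -/
theorem stmt1 {P : Type*} [PartialOrder P]
    [TopologicalSpace P] [Topology.IsScott P Set.univ]
    [FrechetUrysohnSpace (P × P)]
    (hLawsonCompact : @CompactSpace P (Topology.lawson P)) :
    T0Space P ∧ QuasiSober P := by
  have hLS : Topology.lawson P ≤ ‹TopologicalSpace P› :=
    Topology.IsScott.topology_eq P univ ▸ Topology.lawson_le_scott
  have hIci : @ClosedIciTopology P (Topology.lawson P) _ :=
    @ClosedIciTopology.mk P (Topology.lawson P) _ fun u ↦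
      IsClosed.mono (@isClosed_Ici P (Topology.lower P) _
        (@Topology.IsLower.instClosedIciTopology P _ (Topology.lower P)
          (@Topology.IsLower.mk P (Topology.lower P) _ rfl)) u)
        Topology.lawson_le_lower
  have hIic : @ClosedIicTopology P (Topology.lawson P) _ :=
    @ClosedIicTopology.mk P (Topology.lawson P) _ fun u ↦ (isClosed_Iic (a := u)).mono hLS
  refine ⟨inferInstance, ⟨fun {F} hF hFc ↦ ?_⟩⟩
  have hdir := hF.directedOn_of_isClosed_scott hLawsonCompact hLS hIci hFc
  obtain ⟨s, hs⟩ := @DirectedOn.exists_isLUB_of_compactSpace P _ (Topology.lawson P)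
    hLawsonCompact hIci hIic F hF.1 hdir
  have hsF : s ∈ F :=
    Topology.IsScott.dirSupClosed_of_isClosed hFc Subset.rfl hF.1 hdir hs
  refine ⟨s, ?_⟩
  rw [IsGenericPoint, Topology.IsScott.closure_singleton]
  exact Subset.antisymm
    ((Topology.IsScott.isLowerSet_of_isClosed hFc).Iic_subset hsF) fun _ h ↦ hs.1 h
end

section
/- Let P be a poset such that the product space ΣP × ΣP is a Fréchet space. If ΣP is well-filtered and coherent, then ΣP is sober. -/
/-- A subset of a topological space is saturated if it is the intersection of the open sets
containing it. -/
def IsSaturatedSet {X : Type*} [TopologicalSpace X] (A : Set X) : Prop :=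
  A = ⋂₀ {U : Set X | IsOpen U ∧ A ⊆ U}

/-- A space is well-filtered if for every filtered family 𝓕 of compact saturated sets and every
open U with ⋂𝓕 ⊆ U, some member of 𝓕 is contained in U. -/
def WellFiltered (X : Type*) [TopologicalSpace X] : Prop :=
  ∀ 𝓕 : Set (Set X), 𝓕.Nonempty → (∀ K ∈ 𝓕, IsCompact K ∧ IsSaturatedSet K) →
    DirectedOn (fun A B => B ⊆ A) 𝓕 →
    ∀ U : Set X, IsOpen U → ⋂₀ 𝓕 ⊆ U → ∃ K ∈ 𝓕, K ⊆ U

/-- A space is coherent if the intersection of any two compact saturated sets is compact. -/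
def Coherent (X : Type*) [TopologicalSpace X] : Prop :=
  ∀ K Q : Set X, IsCompact K → IsSaturatedSet K → IsCompact Q → IsSaturatedSet Q →
    IsCompact (K ∩ Q)

open Filter Topology

theorem isSaturatedSet_nhdsKer {X : Type*} [TopologicalSpace X] (s : Set X) :
    IsSaturatedSet (nhdsKer s) := by
  rw [IsSaturatedSet, ← nhdsKer_def, nhdsKer_nhdsKer]

theorem IsSaturatedSet.inter {X : Type*} [TopologicalSpace X] {s t : Set X}
    (hs : IsSaturatedSet s) (ht : IsSaturatedSet t) : IsSaturatedSet (s ∩ t) := by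
  refine Set.Subset.antisymm (Set.subset_sInter fun U hU => hU.2) fun x hx => ⟨?_, ?_⟩
  · rw [hs]
    exact fun U hU => hx U ⟨hU.1, Set.inter_subset_left.trans hU.2⟩
  · rw [ht]
    exact fun U hU => hx U ⟨hU.1, Set.inter_subset_right.trans hU.2⟩

/-- In a well-filtered space, if every member of a filtered family of compact saturated sets meets
a closed set, then so does the intersection of the family. -/
theorem WellFiltered.inter_sInter_nonempty {X : Type*} [TopologicalSpace X] (h : WellFiltered X)
    {𝓕 : Set (Set X)} (hne : 𝓕.Nonempty) (hK : ∀ K ∈ 𝓕, IsCompact K ∧ IsSaturatedSet K)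
    (hdir : DirectedOn (fun A B => B ⊆ A) 𝓕) {A : Set X} (hA : IsClosed A)
    (hmeet : ∀ K ∈ 𝓕, (A ∩ K).Nonempty) : (A ∩ ⋂₀ 𝓕).Nonempty := by
  by_contra hempty
  obtain ⟨K, hK𝓕, hKA⟩ := h 𝓕 hne hK hdir Aᶜ hA.isOpen_compl
    fun x hx hxA => hempty ⟨x, hxA, hx⟩
  obtain ⟨x, hxA, hxK⟩ := hmeet K hK𝓕
  exact hKA hxK hxA

/-- Any two points of an irreducible set are simultaneous limits of a sequence in that set, provided
the square of the space is Fréchet–Urysohn. -/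
theorem IsIrreducible.exists_seq_tendsto_both {X : Type*} [TopologicalSpace X]
    [FrechetUrysohnSpace (X × X)] {A : Set X} (hA : IsIrreducible A) {a b : X} (ha : a ∈ A)
    (hb : b ∈ A) :
    ∃ c : ℕ → X, (∀ n, c n ∈ A) ∧ Tendsto c atTop (𝓝 a) ∧ Tendsto c atTop (𝓝 b) := by
  have hmem : (a, b) ∈ closure ((fun x => (x, x)) '' A) := by
    rw [mem_closure_iff]
    intro W hW hab
    obtain ⟨U, V, hU, hV, haU, hbV, hUV⟩ := isOpen_prod_iff.1 hW a b hab
    obtain ⟨c, hcA, hcU, hcV⟩ := hA.2 U V hU hV ⟨a, ha, haU⟩ ⟨b, hb, hbV⟩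
    exact ⟨(c, c), hUV ⟨hcU, hcV⟩, c, hcA, rfl⟩
  obtain ⟨u, huA, hu⟩ := mem_closure_iff_seq_limit.1 hmem
  choose c hcA hcu using huA
  obtain rfl : (fun n => (c n, c n)) = u := funext hcu
  exact ⟨c, hcA, (continuous_fst.tendsto _).comp hu, (continuous_snd.tendsto _).comp hu⟩

theorem Filter.Tendsto.specializes_of_frequently {X : Type*} [TopologicalSpace X] {c : ℕ → X}
    {a e : X} (hc : Tendsto c atTop (𝓝 a)) (he : ∃ᶠ n in atTop, e ⤳ c n) : e ⤳ a := by
  refine specializes_iff_forall_open.2 fun U hU haU => ?_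
  obtain ⟨n, hen, hnU⟩ := (he.and_eventually (hc.eventually (hU.mem_nhds haU))).exists
  exact hen.mem_open hU hnU

/-- If a sequence in a closed set `A` converges to two points, then in a well-filtered coherent
space these points have a common upper bound in `A` for the specialization order. -/
theorem WellFiltered.exists_specializes_of_tendsto {X : Type*} [TopologicalSpace X]
    (hwf : WellFiltered X) (hcoh : Coherent X) {A : Set X} (hA : IsClosed A) {c : ℕ → X} {a b : X}
    (hcA : ∀ n, c n ∈ A) (hca : Tendsto c atTop (𝓝 a)) (hcb : Tendsto c atTop (𝓝 b)) :
    ∃ e ∈ A, e ⤳ a ∧ e ⤳ b := by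
  let K : X → ℕ → Set X := fun x n => nhdsKer (insert x (Set.range fun m => c (m + n)))
  have hKcompact : ∀ x n, Tendsto c atTop (𝓝 x) → IsCompact (K x n) := fun x n hx =>
    ((hx.comp (tendsto_add_atTop_nat n)).isCompact_insert_range).nhdsKer
  have hKanti : ∀ x, Antitone (K x) := by
    intro x m n hmn
    refine nhdsKer_mono (Set.insert_subset_insert ?_)
    rintro _ ⟨k, rfl⟩
    exact ⟨k + (n - m), congrArg c (by omega)⟩
  have hcK : ∀ x n, c n ∈ K x n := fun x n =>
    subset_nhdsKer (Set.mem_insert_of_mem _ ⟨0, congrArg c (by omega)⟩)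
  have hKmem : ∀ {x n e}, e ∈ K x n → e ⤳ x ∨ ∃ m, n ≤ m ∧ e ⤳ c m := by
    intro x n e he
    obtain ⟨y, hy, hey⟩ := mem_nhdsKer_iff_specializes.1 he
    obtain rfl | ⟨m, rfl⟩ := hy
    · exact Or.inl hey
    · exact Or.inr ⟨m + n, by omega, hey⟩
  obtain ⟨e, heA, he⟩ := hwf.inter_sInter_nonempty
    (𝓕 := Set.range fun n => K a n ∩ K b n) (Set.range_nonempty _)
    (by
      rintro _ ⟨n, rfl⟩
      exact ⟨hcoh _ _ (hKcompact a n hca) (isSaturatedSet_nhdsKer _) (hKcompact b n hcb)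
        (isSaturatedSet_nhdsKer _),
        (isSaturatedSet_nhdsKer _).inter (isSaturatedSet_nhdsKer _)⟩)
    (by
      rintro _ ⟨m, rfl⟩ _ ⟨n, rfl⟩
      exact ⟨_, ⟨max m n, rfl⟩,
        Set.inter_subset_inter (hKanti a (le_max_left m n)) (hKanti b (le_max_left m n)),
        Set.inter_subset_inter (hKanti a (le_max_right m n)) (hKanti b (le_max_right m n))⟩)
    hA
    (by
      rintro _ ⟨n, rfl⟩
      exact ⟨c n, hcA n, hcK a n, hcK b n⟩)
  have heK : ∀ n, e ∈ K a n ∩ K b n := fun n => he _ ⟨n, rfl⟩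
  refine ⟨e, heA, ?_⟩
  by_cases hfreq : ∃ᶠ n in atTop, e ⤳ c n
  · exact ⟨hca.specializes_of_frequently hfreq, hcb.specializes_of_frequently hfreq⟩
  · obtain ⟨N, hN⟩ := eventually_atTop.1 (not_frequently.1 hfreq)
    have hnot : ¬ ∃ m, N ≤ m ∧ e ⤳ c m := fun ⟨m, hm, hem⟩ => hN m hm hem
    exact ⟨(hKmem (heK N).1).resolve_right hnot, (hKmem (heK N).2).resolve_right hnot⟩

/-- A well-filtered coherent space with Fréchet–Urysohn square is quasi-sober. -/
theorem WellFiltered.quasiSober {X : Type*} [TopologicalSpace X] [FrechetUrysohnSpace (X × X)]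
    (hwf : WellFiltered X) (hcoh : Coherent X) : QuasiSober X := by
  refine ⟨fun {A} hirr hA => ?_⟩
  obtain ⟨x, hxA, hx⟩ := hwf.inter_sInter_nonempty
    (𝓕 := (fun a => nhdsKer {a}) '' A) (hirr.1.image _)
    (by
      rintro _ ⟨a, -, rfl⟩
      exact ⟨isCompact_singleton.nhdsKer, isSaturatedSet_nhdsKer _⟩)
    (by
      rintro _ ⟨a, ha, rfl⟩ _ ⟨b, hb, rfl⟩
      obtain ⟨c, hcA, hca, hcb⟩ := hirr.exists_seq_tendsto_both ha hb
      obtain ⟨e, heA, hea, heb⟩ := hwf.exists_specializes_of_tendsto hcoh hA hcA hca hcb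
      exact ⟨_, ⟨e, heA, rfl⟩, specializes_iff_nhdsKer_subset.1 hea,
        specializes_iff_nhdsKer_subset.1 heb⟩)
    hA
    (by
      rintro _ ⟨a, ha, rfl⟩
      exact ⟨a, ha, subset_nhdsKer rfl⟩)
  refine ⟨x, Set.Subset.antisymm (hA.closure_subset_iff.2 (Set.singleton_subset_iff.2 hxA)) ?_⟩
  exact fun a ha => (mem_nhdsKer_singleton.1 (hx _ ⟨a, ha, rfl⟩)).mem_closure

/-- Let P be a poset such that the product space ΣP × ΣP is a Fréchet space.
If ΣP is well-filtered and coherent, then ΣP is sober. -/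
theorem stmt2 {P : Type*} [PartialOrder P]
    [TopologicalSpace P] [Topology.IsScott P Set.univ]
    [FrechetUrysohnSpace (P × P)]
    (hwf : WellFiltered P) (hcoh : Coherent P) :
    T0Space P ∧ QuasiSober P :=
  ⟨inferInstance, hwf.quasiSober hcoh⟩
end

section
/- Let P be a bounded complete dcpo. If the product space ΣP × ΣP is a Fréchet space, then ΣP is sober. -/
open Set Filter Topology

/-- In a Scott topology, a sequence of open sets whose pointwise limit inferior contains an open
set `T` has a relatively open intersection with `T`. -/
theorem Topology.IsScott.isOpen_inter_iInter_of_eventually_mem {α : Type*} [Preorder α]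
    [TopologicalSpace α] [IsScott α univ] {T : Set α} {S : ℕ → Set α} (hT : IsOpen T)
    (hS : ∀ k, IsOpen (S k)) (h : ∀ d ∈ T, ∀ᶠ k in atTop, d ∈ S k) :
    IsOpen (T ∩ ⋂ k, S k) := by
  have hSU k : IsUpperSet (S k) := isUpperSet_of_isOpen (D := univ) (hS k)
  have hTU : IsUpperSet T := isUpperSet_of_isOpen (D := univ) hT
  rw [isOpen_iff_isUpperSet_and_dirSupInaccOn (D := univ)]
  refine ⟨hTU.inter (isUpperSet_iInter hSU), fun D hD hne hdir a ha haV => ?_⟩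
  obtain ⟨d₀, hd₀, hd₀T⟩ :=
    (isOpen_iff_isUpperSet_and_dirSupInaccOn (D := univ).1 hT).2 hD hne hdir ha haV.1
  obtain ⟨N, hN⟩ := eventually_atTop.1 (h d₀ hd₀T)
  have hfin (M : ℕ) : ∃ d ∈ D, d₀ ≤ d ∧ ∀ k < M, d ∈ S k := by
    induction M with
    | zero => exact ⟨d₀, hd₀, le_rfl, by simp⟩
    | succ M ih =>
      obtain ⟨d, hd, hle, hdS⟩ := ih
      obtain ⟨e, he, heS⟩ := (isOpen_iff_isUpperSet_and_dirSupInaccOn (D := univ).1 (hS M)).2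
        hD hne hdir ha (mem_iInter.1 haV.2 M)
      obtain ⟨f, hf, hdf, hef⟩ := hdir d hd e he
      refine ⟨f, hf, hle.trans hdf, fun k hk => ?_⟩
      rcases Nat.lt_succ_iff_lt_or_eq.1 hk with hk | rfl
      · exact hSU k hdf (hdS k hk)
      · exact hSU k hef heS
  obtain ⟨d, hd, hle, hdS⟩ := hfin N
  refine ⟨d, hd, hTU hle hd₀T, mem_iInter.2 fun k => ?_⟩
  rcases lt_or_ge k N with hk | hk
  · exact hdS k hk
  · exact hSU k hle (hN k hk)

/-- A subset of a product whose sections are all closed is sequentially closed, provided the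
second factor carries the Scott topology. -/
theorem Topology.IsScott.isSeqClosed_of_isClosed_sections {X α : Type*} [TopologicalSpace X]
    [Preorder α] [TopologicalSpace α] [IsScott α univ] {C : Set (X × α)}
    (hl : ∀ y, IsClosed {x | (x, y) ∈ C}) (hr : ∀ x, IsClosed {y | (x, y) ∈ C}) :
    IsSeqClosed C := by
  rintro u ⟨x, y⟩ hu hlim
  by_contra hxy
  have hx : Tendsto (fun k => (u k).1) atTop (𝓝 x) := (continuous_fst.tendsto _).comp hlim
  have hy : Tendsto (fun k => (u k).2) atTop (𝓝 y) := (continuous_snd.tendsto _).comp hlim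
  have hev (d : α) (hd : (x, d) ∉ C) : ∀ᶠ k in atTop, ((u k).1, d) ∉ C :=
    hx.eventually ((hl d).isOpen_compl.mem_nhds hd)
  obtain ⟨n, hn⟩ := eventually_atTop.1 (hev y hxy)
  have hopen : IsOpen ({d | (x, d) ∈ C}ᶜ ∩ ⋂ k, {d | ((u (k + n)).1, d) ∈ C}ᶜ) :=
    isOpen_inter_iInter_of_eventually_mem (hr x).isOpen_compl (fun k => (hr _).isOpen_compl)
      fun d hd => (tendsto_add_atTop_nat n).eventually (hev d hd)
  have hmem : y ∈ {d | (x, d) ∈ C}ᶜ ∩ ⋂ k, {d | ((u (k + n)).1, d) ∈ C}ᶜ :=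
    ⟨hxy, mem_iInter.2 fun k => hn _ (Nat.le_add_left n k)⟩
  obtain ⟨m, hm, hmn⟩ := ((hy.eventually (hopen.mem_nhds hmem)).and (eventually_ge_atTop n)).exists
  obtain ⟨k, rfl⟩ := Nat.exists_eq_add_of_le' hmn
  exact mem_iInter.1 hm.2 k (hu _)

/-- In a bounded complete dcpo, the elements having a common upper bound with `b` in a Scott closed
set form a Scott closed set. -/
theorem Topology.IsScott.isClosed_setOf_exists_le_le {P : Type*} [PartialOrder P]
    (hdcpo : ∀ D : Set P, D.Nonempty → DirectedOn (· ≤ ·) D → ∃ x, IsLUB D x)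
    (hbc : ∀ S : Set P, (∃ b, b ∈ upperBounds S) → ∃ x, IsLUB S x)
    [TopologicalSpace P] [IsScott P univ] {F : Set P} (hF : IsClosed F) (b : P) :
    IsClosed {a | ∃ c ∈ F, a ≤ c ∧ b ≤ c} := by
  rw [isClosed_iff_isLowerSet_and_dirSupClosed] at hF ⊢
  refine ⟨fun a a' h ⟨c, hc, hac, hb⟩ => ⟨c, hc, h.trans hac, hb⟩, ?_⟩
  intro D hD hne hdir s hs
  have hjoin (a : P) (ha : a ∈ D) : ∃ j ∈ F, IsLUB {a, b} j := by
    obtain ⟨c, hc, hac, hb⟩ := hD ha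
    have hub : c ∈ upperBounds {a, b} := by simp [hac, hb]
    obtain ⟨j, hj⟩ := hbc {a, b} ⟨c, hub⟩
    exact ⟨j, hF.1 (hj.2 hub) hc, hj⟩
  let E : Set P := {j ∈ F | ∃ a ∈ D, IsLUB {a, b} j}
  have hEne : E.Nonempty := by
    obtain ⟨a, ha⟩ := hne
    obtain ⟨j, hjF, hj⟩ := hjoin a ha
    exact ⟨j, hjF, a, ha, hj⟩
  have hle {a a' j j' : P} (h : a ≤ a') (hj : IsLUB {a, b} j) (hj' : IsLUB {a', b} j') :
      j ≤ j' := by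
    refine hj.2 ?_
    simp only [upperBounds_insert, upperBounds_singleton, mem_inter_iff, mem_Ici]
    exact ⟨h.trans (hj'.1 (by simp)), hj'.1 (by simp)⟩
  have hEdir : DirectedOn (· ≤ ·) E := by
    rintro j₁ ⟨-, a₁, ha₁, hj₁⟩ j₂ ⟨-, a₂, ha₂, hj₂⟩
    obtain ⟨a, ha, h₁, h₂⟩ := hdir a₁ ha₁ a₂ ha₂
    obtain ⟨j, hjF, hj⟩ := hjoin a ha
    exact ⟨j, ⟨hjF, a, ha, hj⟩, hle h₁ hj₁ hj, hle h₂ hj₂ hj⟩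
  obtain ⟨c, hc⟩ := hdcpo E hEne hEdir
  refine ⟨c, hF.2 (fun j hj => hj.1) hEne hEdir hc, hs.2 fun a ha => ?_, ?_⟩
  · obtain ⟨j, hjF, hj⟩ := hjoin a ha
    exact (hj.1 (by simp)).trans (hc.1 ⟨hjF, a, ha, hj⟩)
  · obtain ⟨j, hj⟩ := hEne
    obtain ⟨a, -, hlub⟩ := hj.2
    exact (hlub.1 (by simp)).trans (hc.1 hj)

/-- Let P be a bounded complete dcpo. If the product space ΣP × ΣP is a
Fréchet space, then ΣP is sober. -/
theorem stmt3 {P : Type*} [PartialOrder P]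
    (hdcpo : ∀ D : Set P, D.Nonempty → DirectedOn (· ≤ ·) D → ∃ x, IsLUB D x)
    (hbc : ∀ S : Set P, (∃ b, b ∈ upperBounds S) → ∃ x, IsLUB S x)
    [TopologicalSpace P] [Topology.IsScott P Set.univ]
    [FrechetUrysohnSpace (P × P)] :
    T0Space P ∧ QuasiSober P := by
  refine ⟨inferInstance, ⟨fun {F} hirr hF => ?_⟩⟩
  have hsec := IsScott.isClosed_setOf_exists_le_le hdcpo hbc hF
  have hC : IsClosed {p : P × P | ∃ c ∈ F, p.1 ≤ c ∧ p.2 ≤ c} := by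
    refine IsSeqClosed.isClosed (IsScott.isSeqClosed_of_isClosed_sections hsec fun x => ?_)
    simpa only [mem_ofPred_eq, and_comm (a := x ≤ _)] using hsec x
  have hdir : DirectedOn (· ≤ ·) F := by
    intro x hx y hy
    by_contra hxy
    have hmem : (x, y) ∈ {p : P × P | ∃ c ∈ F, p.1 ≤ c ∧ p.2 ≤ c}ᶜ := hxy
    obtain ⟨U, V, hU, hV, hxU, hyV, hUV⟩ := isOpen_prod_iff.1 hC.isOpen_compl x y hmem
    obtain ⟨z, hzF, hzU, hzV⟩ := hirr.2 U V hU hV ⟨x, hx, hxU⟩ ⟨y, hy, hyV⟩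
    exact hUV (mk_mem_prod hzU hzV) ⟨z, hzF, le_rfl, le_rfl⟩
  obtain ⟨s, hs⟩ := hdcpo F hirr.1 hdir
  have hsF : s ∈ F := IsScott.dirSupClosed_of_isClosed hF subset_rfl hirr.1 hdir hs
  refine ⟨s, ?_⟩
  rw [IsGenericPoint, IsScott.closure_singleton]
  exact subset_antisymm (fun a ha => IsScott.isLowerSet_of_isClosed hF ha hsF) fun a ha => hs.1 ha
end

section
/- Let X be an ω-well-filtered coherent d-space. If the product space X × X is a Fréchet space, then X is sober. -/
/-- A space is ω-well-filtered if for every countable filtered family 𝓕 of compact saturated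
sets and every open U with ⋂𝓕 ⊆ U, some member of 𝓕 is contained in U. -/
def OmegaWellFiltered (X : Type*) [TopologicalSpace X] : Prop :=
  ∀ 𝓕 : Set (Set X), 𝓕.Countable → 𝓕.Nonempty →
    (∀ K ∈ 𝓕, IsCompact K ∧ IsSaturatedSet K) →
    DirectedOn (fun A B => B ⊆ A) 𝓕 →
    ∀ U : Set X, IsOpen U → ⋂₀ 𝓕 ⊆ U → ∃ K ∈ 𝓕, K ⊆ U

/-- A space is a d-space (monotone convergence space) if every subset directed under the
specialization order (x ≤ y iff x ∈ cl {y}, i.e. y ⤳ x) has a supremum x for that order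
with closure D = closure {x}. -/
def DSpace (X : Type*) [TopologicalSpace X] : Prop :=
  ∀ D : Set X, D.Nonempty → DirectedOn (fun a b => b ⤳ a) D →
    ∃ x : X, (∀ d ∈ D, x ⤳ d) ∧ (∀ y : X, (∀ d ∈ D, y ⤳ d) → y ⤳ x) ∧
      closure D = closure {x}

theorem isSaturatedSet_iff_nhdsKer_eq {X : Type*} [TopologicalSpace X] {A : Set X} :
    IsSaturatedSet A ↔ nhdsKer A = A := by
  rw [nhdsKer_def, IsSaturatedSet, eq_comm]

theorem IsSaturatedSet.inter_s4 {X : Type*} [TopologicalSpace X] {A B : Set X}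
    (hA : IsSaturatedSet A) (hB : IsSaturatedSet B) : IsSaturatedSet (A ∩ B) := by
  rw [isSaturatedSet_iff_nhdsKer_eq] at *
  refine Set.Subset.antisymm (Set.subset_inter ?_ ?_) subset_nhdsKer
  · exact (nhdsKer_mono Set.inter_subset_left).trans hA.subset
  · exact (nhdsKer_mono Set.inter_subset_right).trans hB.subset

/-- The saturation of a tail of a sequence together with a point `x`. -/
def saturatedTail {X : Type*} [TopologicalSpace X] (x : X) (z : ℕ → X) (n : ℕ) : Set X :=
  nhdsKer (insert x (Set.range fun k => z (k + n)))

section saturatedTail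

variable {X : Type*} [TopologicalSpace X] {x : X} {z : ℕ → X}

theorem isSaturatedSet_saturatedTail (n : ℕ) : IsSaturatedSet (saturatedTail x z n) := by
  rw [isSaturatedSet_iff_nhdsKer_eq, saturatedTail, nhdsKer_nhdsKer]

theorem isCompact_saturatedTail (hz : Filter.Tendsto z Filter.atTop (nhds x)) (n : ℕ) :
    IsCompact (saturatedTail x z n) :=
  (hz.comp (Filter.tendsto_add_atTop_nat n)).isCompact_insert_range.nhdsKer

theorem antitone_saturatedTail : Antitone (saturatedTail x z) := by
  intro m n hmn
  refine nhdsKer_mono (Set.insert_subset_insert ?_)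
  rintro _ ⟨k, rfl⟩
  exact ⟨k + (n - m), congrArg z (by omega)⟩

theorem apply_mem_saturatedTail (n : ℕ) : z n ∈ saturatedTail x z n :=
  subset_nhdsKer (Or.inr ⟨0, congrArg z (Nat.zero_add n)⟩)

/-- A point lying in every saturated tail of a sequence converging to `x` is above `x`. -/
theorem specializes_of_forall_mem_saturatedTail
    (hz : Filter.Tendsto z Filter.atTop (nhds x)) {p : X}
    (hp : ∀ n, p ∈ saturatedTail x z n) : p ⤳ x := by
  refine specializes_iff_forall_open.2 fun U hU hxU => ?_
  obtain ⟨N, hN⟩ := Filter.eventually_atTop.1 (hz.eventually (hU.mem_nhds hxU))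
  refine (hU.nhdsKer_subset.2 ?_) (hp N)
  rintro _ (rfl | ⟨k, rfl⟩)
  · exact hxU
  · exact hN _ (Nat.le_add_left N k)

end saturatedTail

/-- In an ω-well-filtered coherent space, two limits of a sequence in a closed set have a common
upper bound in that closed set. -/
theorem exists_specializes_of_tendsto {X : Type*} [TopologicalSpace X]
    (hwf : OmegaWellFiltered X) (hcoh : Coherent X) {F : Set X} (hF : IsClosed F)
    {x y : X} {z : ℕ → X} (hzF : ∀ n, z n ∈ F)
    (hx : Filter.Tendsto z Filter.atTop (nhds x)) (hy : Filter.Tendsto z Filter.atTop (nhds y)) :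
    ∃ p ∈ F, p ⤳ x ∧ p ⤳ y := by
  let K : ℕ → Set X := fun n => saturatedTail x z n ∩ saturatedTail y z n
  have hK : Antitone K := antitone_saturatedTail.inf antitone_saturatedTail
  have hne : ¬ ⋂₀ Set.range K ⊆ Fᶜ := by
    intro hsub
    obtain ⟨_, ⟨n, rfl⟩, hn⟩ := hwf (Set.range K) (Set.countable_range K) (Set.range_nonempty K)
      (by
        rintro _ ⟨n, rfl⟩
        have hxs := isSaturatedSet_saturatedTail (x := x) (z := z) n
        have hys := isSaturatedSet_saturatedTail (x := y) (z := z) n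
        exact ⟨hcoh _ _ (isCompact_saturatedTail hx n) hxs (isCompact_saturatedTail hy n) hys,
          hxs.inter_s4 hys⟩)
      (by
        rintro _ ⟨m, rfl⟩ _ ⟨n, rfl⟩
        exact ⟨_, ⟨max m n, rfl⟩, hK (le_max_left m n), hK (le_max_right m n)⟩)
      Fᶜ hF.isOpen_compl hsub
    exact hn ⟨apply_mem_saturatedTail n, apply_mem_saturatedTail n⟩ (hzF n)
  obtain ⟨p, hp, hpF⟩ := Set.not_subset.1 hne
  have hpK : ∀ n, p ∈ K n := fun n => hp _ ⟨n, rfl⟩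
  exact ⟨p, not_not.1 hpF, specializes_of_forall_mem_saturatedTail hx fun n => (hpK n).1,
    specializes_of_forall_mem_saturatedTail hy fun n => (hpK n).2⟩

/-- If `X × X` is Fréchet–Urysohn, any two points of an irreducible set are limits of a common
sequence in that set. -/
theorem IsIrreducible.exists_seq_tendsto_tendsto {X : Type*} [TopologicalSpace X]
    [FrechetUrysohnSpace (X × X)] {F : Set X} (hF : IsIrreducible F) {x y : X}
    (hx : x ∈ F) (hy : y ∈ F) :
    ∃ z : ℕ → X, (∀ n, z n ∈ F) ∧ Filter.Tendsto z Filter.atTop (nhds x) ∧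
      Filter.Tendsto z Filter.atTop (nhds y) := by
  have hmem : (x, y) ∈ closure ((fun a => (a, a)) '' F) := by
    refine mem_closure_iff_nhds.2 fun W hW => ?_
    obtain ⟨U, V, hU, hxU, hV, hyV, hUV⟩ := mem_nhds_prod_iff'.1 hW
    obtain ⟨a, haF, haU, haV⟩ := hF.2 U V hU hV ⟨x, hx, hxU⟩ ⟨y, hy, hyV⟩
    exact ⟨(a, a), hUV ⟨haU, haV⟩, a, haF, rfl⟩
  obtain ⟨w, hw, hlim⟩ := mem_closure_iff_seq_limit.1 hmem
  choose z hzF hzw using hw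
  obtain rfl : (fun n => (z n, z n)) = w := funext hzw
  exact ⟨z, hzF, hlim.fst_nhds, hlim.snd_nhds⟩

/-- Let X be an ω-well-filtered coherent d-space. If the product space X × X is
a Fréchet space, then X is sober. -/
theorem stmt4 {X : Type*} [TopologicalSpace X] [T0Space X]
    (h1 : OmegaWellFiltered X) (h2 : Coherent X) (h3 : DSpace X)
    [FrechetUrysohnSpace (X × X)] :
    QuasiSober X := by
  refine ⟨fun {F} hirr hF => ?_⟩
  obtain ⟨x, -, -, hx⟩ := h3 F hirr.nonempty fun a ha b hb => by
    obtain ⟨z, hzF, hza, hzb⟩ := hirr.exists_seq_tendsto_tendsto ha hb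
    exact exists_specializes_of_tendsto h1 h2 hF hzF hza hzb
  exact ⟨x, hx.symm.trans hF.closure_eq⟩
end

section
/- Let X and Y be ω type P-spaces. Then the Scott topology on the product lattice 𝒪(X) × 𝒪(Y) coincides with the product topology of Σ𝒪(X) and Σ𝒪(Y). -/
/-- A topological space is an ω type space if its topology is generated by a subbase
consisting of countable sets. -/
def OmegaTypeSpace (X : Type*) [t : TopologicalSpace X] : Prop :=
  ∃ S : Set (Set X), (∀ s ∈ S, s.Countable) ∧ t = TopologicalSpace.generateFrom S

/-- A topological space is a P-space if every countable intersection of open sets is open. -/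
def PSpace (X : Type*) [TopologicalSpace X] : Prop :=
  ∀ S : Set (Set X), S.Countable → (∀ U ∈ S, IsOpen U) → IsOpen (⋂₀ S)

open Set TopologicalSpace Topology

/-- In an ω type P-space every point has a least open neighbourhood. -/
theorem OmegaTypeSpace.isOpen_nhdsKer_singleton {X : Type*} [t : TopologicalSpace X]
    (hω : OmegaTypeSpace X) (hP : PSpace X) (x : X) : IsOpen (nhdsKer {x}) := by
  obtain ⟨S, hS, ht⟩ := hω
  by_cases hx : ∃ s ∈ S, x ∈ s
  · obtain ⟨s, hsS, hxs⟩ := hx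
    have hs : IsOpen s := by
      rw [ht]
      exact isOpen_generateFrom_of_mem hsS
    have hsep : ∀ y, ∃ U : Set X, IsOpen U ∧ x ∈ U ∧ (y ∈ U → y ∈ nhdsKer {x}) := by
      intro y
      by_cases hy : y ∈ nhdsKer {x}
      · exact ⟨univ, isOpen_univ, mem_univ x, fun _ => hy⟩
      · simp only [mem_nhdsKer, singleton_subset_iff] at hy
        push Not at hy
        obtain ⟨U, hU, hxU, hyU⟩ := hy
        exact ⟨U, hU, hxU, fun h => absurd h hyU⟩
    choose U hU hxU hyU using hsep
    have heq : nhdsKer {x} = ⋂₀ insert s (U '' s) := by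
      apply Subset.antisymm
      · rw [subset_sInter_iff]
        rintro V (rfl | ⟨y, -, rfl⟩)
        · exact nhdsKer_minimal (singleton_subset_iff.2 hxs) hs
        · exact nhdsKer_minimal (singleton_subset_iff.2 (hxU y)) (hU y)
      · intro y hy
        exact hyU y (hy _ (mem_insert_of_mem _ ⟨y, hy s (mem_insert _ _), rfl⟩))
    rw [heq]
    refine hP _ (((hS s hsS).image U).insert s) ?_
    rintro V (rfl | ⟨y, -, rfl⟩)
    · exact hs
    · exact hU y
  · have hnhds : 𝓝 x = ⊤ := by
      rw [ht, nhds_generateFrom]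
      refine iInf₂_eq_top.2 fun s hs => absurd ⟨s, hs.2, hs.1⟩ hx
    rw [nhdsKer_singleton_eq_ker_nhds, hnhds, Filter.ker_top]
    exact isOpen_univ

theorem OmegaTypeSpace.alexandrovDiscrete {X : Type*} [TopologicalSpace X]
    (hω : OmegaTypeSpace X) (hP : PSpace X) : AlexandrovDiscrete X where
  isOpen_sInter _ hS := isOpen_iff_forall_mem_open.2 fun x hx =>
    ⟨nhdsKer {x}, subset_sInter fun U hU =>
      nhdsKer_minimal (singleton_subset_iff.2 (hx U hU)) (hS U hU),
      hω.isOpen_nhdsKer_singleton hP x, subset_nhdsKer rfl⟩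

/-- The open sets of an Alexandrov-discrete space form an algebraic lattice. -/
theorem TopologicalSpace.Opens.isCompactlyGenerated_of_alexandrovDiscrete (X : Type*)
    [TopologicalSpace X] [AlexandrovDiscrete X] : IsCompactlyGenerated (Opens X) where
  exists_sSup_eq U := by
    refine ⟨(fun x => ⟨nhdsKer {x}, isOpen_nhdsKer⟩) '' (U : Set X), ?_, ?_⟩
    · rintro _ ⟨x, -, rfl⟩
      exact (Opens.isCompactElement_iff _).2 (IsCompact.nhdsKer_iff.2 isCompact_singleton)
    · apply le_antisymm
      · refine sSup_le ?_
        rintro _ ⟨x, hx, rfl⟩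
        exact nhdsKer_minimal (singleton_subset_iff.2 hx) U.isOpen
      · intro x hx
        exact Opens.mem_sSup.2 ⟨_, mem_image_of_mem _ hx, subset_nhdsKer rfl⟩

theorem isOpen_scott_iff {α : Type*} [Preorder α] {s : Set α} :
    IsOpen[scott α univ] s ↔ IsUpperSet s ∧ DirSupInacc s := by
  let : TopologicalSpace α := scott α univ
  have : IsScott α univ := ⟨rfl⟩
  rw [← dirSupInaccOn_univ]
  exact IsScott.isOpen_iff_isUpperSet_and_dirSupInaccOn

theorem ScottContinuousOn.continuous_scott {α β : Type*} [Preorder α] [Preorder β] {f : α → β}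
    (hf : ScottContinuousOn univ f) : Continuous[scott α univ, scott β univ] f := by
  let : TopologicalSpace α := scott α univ
  let : TopologicalSpace β := scott β univ
  have : IsScott α univ := ⟨rfl⟩
  have : IsScott β univ := ⟨rfl⟩
  exact (IsScott.scottContinuousOn_iff_continuous fun _ _ _ => mem_univ _).1 hf

theorem IsCompactElement.isOpen_scott_Ici {α : Type*} [PartialOrder α] {k : α}
    (hk : IsCompactElement k) : IsOpen[scott α univ] (Ici k) :=
  isOpen_scott_iff.2 ⟨isUpperSet_Ici k, fun d hne hdir a ha hka => hk d a hne hdir ha hka⟩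

theorem isCompactElement_bot {α : Type*} [PartialOrder α] [OrderBot α] :
    IsCompactElement (⊥ : α) := fun _ _ hne _ _ _ => hne.imp fun _ hx => ⟨hx, bot_le⟩

theorem IsCompactElement.sup {α : Type*} [SemilatticeSup α] {k l : α}
    (hk : IsCompactElement k) (hl : IsCompactElement l) : IsCompactElement (k ⊔ l) := by
  intro s u hne hdir hu hle
  obtain ⟨x, hx, hkx⟩ := hk s u hne hdir hu (le_sup_left.trans hle)
  obtain ⟨y, hy, hly⟩ := hl s u hne hdir hu (le_sup_right.trans hle)
  obtain ⟨z, hz, hxz, hyz⟩ := hdir x hx y hy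
  exact ⟨z, hz, sup_le (hkx.trans hxz) (hly.trans hyz)⟩

/-- The compact elements below a given element are directed. -/
theorem directedOn_isCompactElement_le {α : Type*} [SemilatticeSup α] (a : α) :
    DirectedOn (· ≤ ·) {k : α | IsCompactElement k ∧ k ≤ a} := fun k hk l hl =>
  ⟨k ⊔ l, ⟨IsCompactElement.sup hk.1 hl.1, sup_le hk.2 hl.2⟩, le_sup_left, le_sup_right⟩

/-- The Scott topology is compatible with products of algebraic lattices. -/
theorem scott_prod_eq_of_isCompactlyGenerated (α β : Type*) [CompleteLattice α] [CompleteLattice β]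
    [IsCompactlyGenerated α] [IsCompactlyGenerated β] :
    scott (α × β) univ =
      @instTopologicalSpaceProd α β (scott α univ) (scott β univ) := by
  let : TopologicalSpace α := scott α univ
  let : TopologicalSpace β := scott β univ
  apply le_antisymm
  · exact le_inf
      (continuous_iff_le_induced.1 ScottContinuousOn.fst.continuous_scott)
      (continuous_iff_le_induced.1 ScottContinuousOn.snd.continuous_scott)
  · intro W hW
    obtain ⟨hup, hacc⟩ := isOpen_scott_iff.1 hW
    refine isOpen_prod_iff.2 fun a b hab => ?_
    have hneα : {k : α | IsCompactElement k ∧ k ≤ a}.Nonempty :=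
      ⟨⊥, isCompactElement_bot, bot_le⟩
    have hneβ : {k : β | IsCompactElement k ∧ k ≤ b}.Nonempty :=
      ⟨⊥, isCompactElement_bot, bot_le⟩
    have hlub : IsLUB ({k : α | IsCompactElement k ∧ k ≤ a} ×ˢ
        {k : β | IsCompactElement k ∧ k ≤ b}) (a, b) := by
      rw [isLUB_prod, fst_image_prod _ hneβ, snd_image_prod hneα]
      exact ⟨isLUB_iff_sSup_eq.2 (sSup_compact_le_eq a), isLUB_iff_sSup_eq.2 (sSup_compact_le_eq b)⟩
    obtain ⟨⟨k, l⟩, ⟨hk, hl⟩, hkl⟩ := hacc (hneα.prod hneβ)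
      ((directedOn_isCompactElement_le a).prod (directedOn_isCompactElement_le b)) hlub hab
    exact ⟨Ici k, Ici l, IsCompactElement.isOpen_scott_Ici hk.1,
      IsCompactElement.isOpen_scott_Ici hl.1, hk.2, hl.2,
      fun p hp => hup (show (k, l) ≤ p from ⟨hp.1, hp.2⟩) hkl⟩

/-- Let X and Y be ω type P-spaces. Then the Scott topology on the product
lattice 𝒪(X) × 𝒪(Y) coincides with the product topology of Σ𝒪(X) and Σ𝒪(Y). -/
theorem stmt10 {X Y : Type*} [TopologicalSpace X] [TopologicalSpace Y]
    (hX1 : OmegaTypeSpace X) (hX2 : PSpace X)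
    (hY1 : OmegaTypeSpace Y) (hY2 : PSpace Y) :
    Topology.scott (TopologicalSpace.Opens X × TopologicalSpace.Opens Y) Set.univ =
      @instTopologicalSpaceProd (TopologicalSpace.Opens X) (TopologicalSpace.Opens Y)
        (Topology.scott (TopologicalSpace.Opens X) Set.univ)
        (Topology.scott (TopologicalSpace.Opens Y) Set.univ) := by
  have := hX1.alexandrovDiscrete hX2
  have := hY1.alexandrovDiscrete hY2
  have := Opens.isCompactlyGenerated_of_alexandrovDiscrete X
  have := Opens.isCompactlyGenerated_of_alexandrovDiscrete Y
  exact scott_prod_eq_of_isCompactlyGenerated (Opens X) (Opens Y)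
end

section
/- Let P and Q be posets such that ΣP and ΣQ are ω type spaces. Then the Scott topology on the product lattice σ(P) × σ(Q) coincides with the product topology of Σσ(P) and Σσ(Q). -/
open Set TopologicalSpace Topology

/-- An open set `U` is finitely approximable if some sequence of finite subsets `F n` of `U` has
the following property: whenever `V n` is an open superset of `F n` for every `n`, there is an
increasing sequence of open sets `W n ≤ V n` with supremum `U`. -/
def FinitelyApproximable {X : Type*} [TopologicalSpace X] (U : Opens X) : Prop :=
  ∃ F : ℕ → Set X, (∀ n, (F n).Finite ∧ F n ⊆ U) ∧
    ∀ V : ℕ → Opens X, (∀ n, F n ⊆ V n) →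
      ∃ W : ℕ → Opens X, Monotone W ∧ (∀ n, W n ≤ V n) ∧ IsLUB (range W) U

/-- If `s n` eventually contains every point of an open set `U`, as witnessed by a rank function,
then `U ∩ ⋂ m ≥ n, s m` is open in the Scott topology. -/
theorem Topology.IsScott.isOpen_inter_iInter_of_rank {P : Type*} [PartialOrder P]
    [TopologicalSpace P] [IsScott P univ] {U : Set P} (hU : IsOpen U) {s : ℕ → Set P}
    (hs : ∀ n, IsOpen (s n)) (f : P → ℕ) (hf : ∀ x ∈ U, ∀ m, f x ≤ m → x ∈ s m) (n : ℕ) :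
    IsOpen {x | x ∈ U ∧ ∀ m, n ≤ m → x ∈ s m} := by
  have upper {t : Set P} (ht : IsOpen t) : IsUpperSet t := isUpperSet_of_isOpen (D := univ) ht
  have inacc {t : Set P} (ht : IsOpen t) : DirSupInaccOn univ t :=
    ((isOpen_iff_isUpperSet_and_dirSupInaccOn (D := univ)).1 ht).2
  rw [IsScott.isOpen_iff_isUpperSet_and_dirSupInaccOn (D := univ)]
  refine ⟨fun x y hxy hx => ⟨upper hU hxy hx.1, fun m hm => upper (hs m) hxy (hx.2 m hm)⟩, ?_⟩
  intro d _ hne hdir a ha haW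
  obtain ⟨x, hxd, hxU⟩ := inacc hU trivial hne hdir ha haW.1
  have hfin : IsOpen (⋂ m ∈ Finset.Ico n (f x), s m) :=
    isOpen_biInter_finset fun m _ => hs m
  obtain ⟨y, hyd, hy⟩ := inacc hfin trivial hne hdir ha
    (mem_iInter₂.2 fun m hm => haW.2 m (Finset.mem_Ico.1 hm).1)
  obtain ⟨z, hzd, hxz, hyz⟩ := hdir x hxd y hyd
  refine ⟨z, hzd, upper hU hxz hxU, fun m hm => ?_⟩
  rcases lt_or_ge m (f x) with hlt | hge
  · exact upper (hs m) hyz (mem_iInter₂.1 hy m (Finset.mem_Ico.2 ⟨hm, hlt⟩))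
  · exact upper (hs m) hxz (hf x hxU m hge)

theorem FinitelyApproximable.of_countable {P : Type*} [PartialOrder P] [TopologicalSpace P]
    [IsScott P univ] {U : Opens P} (hU : (U : Set P).Countable) : FinitelyApproximable U := by
  obtain ⟨f, hf⟩ := countable_iff_exists_injOn.1 hU
  refine ⟨fun n => U ∩ f ⁻¹' Iic n, fun n => ⟨?_, inter_subset_left⟩, fun V hV => ?_⟩
  · exact Finite.of_injOn (f := f) (t := Iic n) (fun x hx => hx.2)
      (hf.mono inter_subset_left) (finite_Iic n)
  · have hmem : ∀ x ∈ (U : Set P), ∀ m, f x ≤ m → x ∈ (V m : Set P) :=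
      fun x hx m hm => hV m ⟨hx, hm⟩
    refine ⟨fun n => ⟨_, IsScott.isOpen_inter_iInter_of_rank U.isOpen
      (fun m => (V m).isOpen) f hmem n⟩, ?_, ?_, ?_, ?_⟩
    · exact fun i j hij x hx => ⟨hx.1, fun m hm => hx.2 m (hij.trans hm)⟩
    · exact fun n x hx => hx.2 n le_rfl
    · rintro _ ⟨n, rfl⟩ x hx
      exact hx.1
    · intro T hT x hx
      exact hT (mem_range_self (f x)) ⟨hx, fun m hm => hmem x hx m hm⟩

theorem FinitelyApproximable.of_forall_eq_top {X : Type*} [TopologicalSpace X] {x : X}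
    (hx : ∀ V : Opens X, x ∈ V → V = ⊤) : FinitelyApproximable (⊤ : Opens X) := by
  refine ⟨fun _ => {x}, fun _ => ⟨finite_singleton x, subset_univ _⟩, fun V hV =>
    ⟨fun _ => ⊤, monotone_const, fun n => (hx _ (hV n rfl)).ge, ?_⟩⟩
  simp [range_const]

/-- In an ω type space, every point of a proper open set `U` has a countable open neighbourhood
contained in `U`. -/
theorem OmegaTypeSpace.eq_univ_or_exists_countable {X : Type*} [t : TopologicalSpace X]
    (hX : OmegaTypeSpace X) {U : Set X} (hU : IsOpen U) :
    U = univ ∨ ∀ x ∈ U, ∃ V : Opens X, (V : Set X).Countable ∧ x ∈ V ∧ (V : Set X) ⊆ U := by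
  obtain ⟨S, hS, rfl⟩ := hX
  let : TopologicalSpace X := generateFrom S
  induction hU with
  | basic s hs =>
    exact .inr fun x hx => ⟨⟨s, .basic s hs⟩, hS s hs, hx, subset_rfl⟩
  | univ => exact .inl rfl
  | inter s u _ hu ihs ihu =>
    rcases ihs with rfl | ihs
    · simpa using ihu
    · refine .inr fun x hx => ?_
      obtain ⟨V, hVc, hxV, hVs⟩ := ihs x hx.1
      exact ⟨V ⊓ ⟨u, hu⟩, hVc.mono inter_subset_left, ⟨hxV, hx.2⟩,
        inter_subset_inter_left _ hVs⟩
  | sUnion A _ ih =>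
    by_cases h : univ ∈ A
    · exact .inl (eq_univ_of_univ_subset (subset_sUnion_of_mem h))
    · refine .inr fun x ⟨s, hsA, hxs⟩ => ?_
      rcases ih s hsA with rfl | ihs
      · exact absurd hsA h
      · obtain ⟨V, hVc, hxV, hVs⟩ := ihs x hxs
        exact ⟨V, hVc, hxV, hVs.trans (subset_sUnion_of_mem hsA)⟩

/-- In a Scott ω type space, every open set is the directed supremum of finitely approximable
open sets. -/
theorem OmegaTypeSpace.exists_directedOn_isLUB {P : Type*} [PartialOrder P] [TopologicalSpace P]
    [IsScott P univ] (hP : OmegaTypeSpace P) (U : Opens P) :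
    ∃ d : Set (Opens P), d.Nonempty ∧ DirectedOn (· ≤ ·) d ∧ IsLUB d U ∧
      ∀ V ∈ d, FinitelyApproximable V := by
  by_cases h : ∀ x ∈ U, ∃ V : Opens P, (V : Set P).Countable ∧ x ∈ V ∧ (V : Set P) ⊆ U
  · refine ⟨{V | (V : Set P).Countable ∧ V ≤ U}, ⟨⊥, by simp⟩, ?_, ⟨fun V hV => hV.2, ?_⟩,
      fun V hV => .of_countable hV.1⟩
    · exact fun V hV W hW => ⟨V ⊔ W, ⟨by simpa using ⟨hV.1, hW.1⟩, sup_le hV.2 hW.2⟩,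
        le_sup_left, le_sup_right⟩
    · intro T hT x hx
      obtain ⟨V, hVc, hxV, hVU⟩ := h x hx
      exact hT ⟨hVc, hVU⟩ hxV
  · have hU : U = ⊤ := Opens.ext ((hP.eq_univ_or_exists_countable U.isOpen).resolve_right h)
    subst hU
    push Not at h
    obtain ⟨x, -, hx⟩ := h
    refine ⟨{⊤}, singleton_nonempty _, directedOn_singleton _, isLUB_singleton, ?_⟩
    rintro _ rfl
    refine .of_forall_eq_top (x := x) fun V hxV => Opens.ext ?_
    refine (hP.eq_univ_or_exists_countable V.isOpen).resolve_right fun hV => ?_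
    obtain ⟨W, hWc, hxW, -⟩ := hV x hxV
    exact hx W hWc hxW (subset_univ _)

theorem Topology.isScott_scott (α : Type*) [Preorder α] (D : Set (Set α)) :
    @IsScott α D _ (scott α D) :=
  @IsScott.mk α D _ (scott α D) rfl

/-- The open supersets of a finite set form a Scott open family. -/
theorem isOpen_scott_setOf_finite_subset {X : Type*} [TopologicalSpace X] {F : Set X}
    (hF : F.Finite) : IsOpen[scott (Opens X) univ] {U : Opens X | F ⊆ U} := by
  let : TopologicalSpace (Opens X) := scott (Opens X) univ
  have : IsScott (Opens X) univ := isScott_scott _ _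
  have key (x : X) : IsOpen {U : Opens X | x ∈ U} := by
    rw [IsScott.isOpen_iff_isUpperSet_and_dirSupInaccOn (D := univ)]
    refine ⟨fun U V hUV hU => hUV hU, fun d _ _ _ a ha hxa => ?_⟩
    rw [← ha.sSup_eq] at hxa
    obtain ⟨U, hU, hxU⟩ := Opens.mem_sSup.1 hxa
    exact ⟨U, hU, hxU⟩
  convert! hF.isOpen_biInter fun x _ => key x using 1
  ext U
  simp [subset_def]

/-- A Scott open family of pairs of open sets contains, around a pair of finitely approximable
sets, a box given by finite sets. -/
theorem FinitelyApproximable.exists_finite_box {X Y : Type*} [TopologicalSpace X]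
    [TopologicalSpace Y] {U : Opens X} {V : Opens Y} (hU : FinitelyApproximable U)
    (hV : FinitelyApproximable V) {A : Set (Opens X × Opens Y)} (hup : IsUpperSet A)
    (hA : DirSupInaccOn univ A) (hUV : (U, V) ∈ A) :
    ∃ (F : Set X) (G : Set Y), F.Finite ∧ G.Finite ∧ F ⊆ U ∧ G ⊆ V ∧
      ∀ (U' : Opens X) (V' : Opens Y), F ⊆ U' → G ⊆ V' → (U', V') ∈ A := by
  obtain ⟨F, hF, hFU⟩ := hU
  obtain ⟨G, hG, hGV⟩ := hV
  by_contra! hcon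
  choose S T hS hT hST using fun n =>
    hcon (F n) (G n) (hF n).1 (hG n).1 (hF n).2 (hG n).2
  obtain ⟨W, hWmono, hWS, hW⟩ := hFU S hS
  obtain ⟨Z, hZmono, hZT, hZ⟩ := hGV T hT
  have hmono : Monotone fun n => (W n, Z n) := fun i j hij => ⟨hWmono hij, hZmono hij⟩
  have hlub : IsLUB (range fun n => (W n, Z n)) (U, V) := by
    rw [isLUB_prod, ← range_comp, ← range_comp]
    exact ⟨hW, hZ⟩
  obtain ⟨_, ⟨n, rfl⟩, hn⟩ :=
    hA trivial (range_nonempty _) hmono.directed_le.directedOn_range hlub hUV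
  exact hST n (hup ⟨hWS n, hZT n⟩ hn)

/-- Let P and Q be posets such that ΣP and ΣQ are ω type spaces. Then the
Scott topology on the product lattice σ(P) × σ(Q) coincides with the product topology of
Σσ(P) and Σσ(Q).  (Here P and Q carry their Scott topologies, so `Opens P = σ(P)` and
`Opens Q = σ(Q)` as complete lattices ordered by inclusion.) -/
theorem stmt13 {P Q : Type*} [PartialOrder P] [PartialOrder Q]
    [TopologicalSpace P] [Topology.IsScott P Set.univ]
    [TopologicalSpace Q] [Topology.IsScott Q Set.univ]
    (hP : OmegaTypeSpace P) (hQ : OmegaTypeSpace Q) :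
    Topology.scott (TopologicalSpace.Opens P × TopologicalSpace.Opens Q) Set.univ =
      @instTopologicalSpaceProd (TopologicalSpace.Opens P) (TopologicalSpace.Opens Q)
        (Topology.scott (TopologicalSpace.Opens P) Set.univ)
        (Topology.scott (TopologicalSpace.Opens Q) Set.univ) := by
  let tP : TopologicalSpace (Opens P) := scott (Opens P) univ
  let tQ : TopologicalSpace (Opens Q) := scott (Opens Q) univ
  have : IsScott (Opens P) univ := isScott_scott _ _
  have : IsScott (Opens Q) univ := isScott_scott _ _
  refine le_antisymm ?_ fun A hA => ?_
  · refine le_inf (continuous_iff_le_induced.1 ?_) (continuous_iff_le_induced.1 ?_)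
    · exact (@IsScott.scottContinuousOn_iff_continuous _ _ _ (scott _ univ) _ _ _ _ univ (isScott_scott _ _)
        fun _ _ _ => trivial).1 ScottContinuousOn.fst
    · exact (@IsScott.scottContinuousOn_iff_continuous _ _ _ (scott _ univ) _ _ _ _ univ (isScott_scott _ _)
        fun _ _ _ => trivial).1 ScottContinuousOn.snd
  · obtain ⟨hup, hinacc⟩ := (@IsScott.isOpen_iff_isUpperSet_and_dirSupInaccOn _ univ _
      (scott (Opens P × Opens Q) univ) A (isScott_scott _ _)).1 hA
    refine isOpen_prod_iff.2 fun U V hUV => ?_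
    obtain ⟨d, hdne, hd, hdU, hdapp⟩ := hP.exists_directedOn_isLUB U
    obtain ⟨e, hene, he, heV, heapp⟩ := hQ.exists_directedOn_isLUB V
    have hdir : DirectedOn (· ≤ ·) (d ×ˢ e) := by
      rintro ⟨a, b⟩ ⟨ha, hb⟩ ⟨a', b'⟩ ⟨ha', hb'⟩
      obtain ⟨x, hx, hax, hax'⟩ := hd a ha a' ha'
      obtain ⟨y, hy, hby, hby'⟩ := he b hb b' hb'
      exact ⟨(x, y), ⟨hx, hy⟩, ⟨hax, hby⟩, ⟨hax', hby'⟩⟩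
    have hlub : IsLUB (d ×ˢ e) (U, V) := by
      rw [isLUB_prod, fst_image_prod _ hene, snd_image_prod hdne]
      exact ⟨hdU, heV⟩
    obtain ⟨⟨U', V'⟩, ⟨hU', hV'⟩, hmem⟩ := hinacc trivial (hdne.prod hene) hdir hlub hUV
    obtain ⟨F, G, hF, hG, hFU, hGV, hbox⟩ :=
      (hdapp U' hU').exists_finite_box (heapp V' hV') hup hinacc hmem
    exact ⟨_, _, isOpen_scott_setOf_finite_subset hF, isOpen_scott_setOf_finite_subset hG,
      hFU.trans (hdU.1 hU'), hGV.trans (heV.1 hV'), fun p hp => hbox p.1 p.2 hp.1 hp.2⟩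
end

section
/- Let P be a poset such that ΣP is an ω type space. Then the complete lattice σ(P) of Scott-open subsets of P, equipped with the Scott topology, is sober. -/
/-- A poset is Scott sober if, equipped with its Scott topology, it is a sober space
(T0 and every irreducible closed set is the closure of a point). -/
def ScottSober (L : Type*) [Preorder L] : Prop :=
  @T0Space L (Topology.scott L Set.univ) ∧ @QuasiSober L (Topology.scott L Set.univ)

open Set TopologicalSpace Topology

/-- In an ω type space a point without a countable open neighbourhood has only the whole space
as a neighbourhood. -/
theorem OmegaTypeSpace.exists_countable_or_eq_top {X : Type*} [TopologicalSpace X]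
    (hX : OmegaTypeSpace X) (x : X) :
    (∃ U : Opens X, x ∈ U ∧ (U : Set X).Countable) ∨
      ∀ U : Opens X, x ∈ U → U = ⊤ := by
  obtain ⟨S, hS, rfl⟩ := hX
  let := generateFrom S
  by_cases h : ∃ s ∈ S, x ∈ s
  · obtain ⟨s, hs, hx⟩ := h
    exact Or.inl ⟨⟨s, isOpen_generateFrom_of_mem hs⟩, hx, hS s hs⟩
  · refine Or.inr fun U hU ↦ Opens.ext ?_
    have key : ∀ s : Set X, GenerateOpen S s → x ∈ s → s = univ := by
      intro s hs
      induction hs with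
      | basic s hs => exact fun hx ↦ (h ⟨s, hs, hx⟩).elim
      | univ => exact fun _ ↦ rfl
      | inter s t _ _ ihs iht => exact fun hx ↦ by rw [ihs hx.1, iht hx.2, inter_univ]
      | sUnion T _ ih =>
        rintro ⟨t, ht, hx⟩
        exact univ_subset_iff.1 (ih t ht hx ▸ subset_sUnion_of_mem ht)
    exact key U U.isOpen hU

namespace Topology.IsScott

/-- In a Scott space, the intersection of a family of open sets that is point-cofinite on an open
set `W` is open within `W`. -/
theorem isOpen_inter_iInter_of_finite {P ι : Type*} [Preorder P] [TopologicalSpace P]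
    [IsScott P univ] {W : Set P} (hW : IsOpen W) {b : ι → Set P} (hb : ∀ i, IsOpen (b i))
    (hfin : ∀ x ∈ W, {i | x ∉ b i}.Finite) : IsOpen (W ∩ ⋂ i, b i) := by
  have hup (i : ι) : IsUpperSet (b i) := isUpperSet_of_isOpen (D := univ) (hb i)
  have hWup : IsUpperSet W := isUpperSet_of_isOpen (D := univ) hW
  rw [isOpen_iff_isUpperSet_and_dirSupInaccOn (D := univ)]
  refine ⟨hWup.inter (isUpperSet_iInter hup), fun d _ hne hd a ha haW ↦ ?_⟩
  obtain ⟨x, hxd, hxW⟩ := (isOpen_iff_isUpperSet_and_dirSupInaccOn (D := univ).1 hW).2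
    (mem_univ d) hne hd ha haW.1
  have hI : IsOpen (⋂ i ∈ {i | x ∉ b i}, b i) := (hfin x hxW).isOpen_biInter fun i _ ↦ hb i
  obtain ⟨y, hyd, hy⟩ := (isOpen_iff_isUpperSet_and_dirSupInaccOn (D := univ).1 hI).2
    (mem_univ d) hne hd ha (mem_iInter₂.2 fun i _ ↦ mem_iInter.1 haW.2 i)
  obtain ⟨z, hzd, hxz, hyz⟩ := hd x hxd y hyd
  refine ⟨z, hzd, hWup hxz hxW, mem_iInter.2 fun i ↦ ?_⟩
  by_cases hi : x ∈ b i
  · exact hup i hxz hi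
  · exact hup i hyz (mem_iInter₂.1 hy i hi)

section Opens

variable {X : Type*} [TopologicalSpace X] [TopologicalSpace (Opens X)] [IsScott (Opens X) univ]

theorem isOpen_setOf_mem_opens (x : X) : IsOpen {U : Opens X | x ∈ U} := by
  rw [isOpen_iff_isUpperSet_and_dirSupInaccOn (D := univ)]
  refine ⟨fun U V hUV hU ↦ hUV hU, fun d _ _ _ U hU hx ↦ ?_⟩
  rw [← hU.sSup_eq] at hx
  obtain ⟨V, hV, hxV⟩ := Opens.mem_sSup.1 hx
  exact ⟨V, hV, hxV⟩

theorem _root_.IsIrreducible.exists_opens_superset {F : Set (Opens X)} (hF : IsIrreducible F)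
    {s : Set X} (hs : s.Finite) (hsF : s ⊆ (sSup F : Opens X)) : ∃ A ∈ F, s ⊆ A := by
  suffices h : IsOpen {U : Opens X | s ⊆ U} ∧ (F ∩ {U : Opens X | s ⊆ U}).Nonempty from h.2
  induction s, hs using Set.Finite.induction_on with
  | empty => simpa using hF.nonempty
  | @insert x s _ _ ih =>
    obtain ⟨ho, hne⟩ := ih ((subset_insert x s).trans hsF)
    obtain ⟨A, hA, hxA⟩ := Opens.mem_sSup.1 (hsF (mem_insert x s))
    have heq : {U : Opens X | insert x s ⊆ (U : Set X)} =
        {U : Opens X | x ∈ U} ∩ {U : Opens X | s ⊆ U} := by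
      ext U
      simp [insert_subset_iff]
    rw [heq]
    exact ⟨(isOpen_setOf_mem_opens x).inter ho,
      hF.2 _ _ (isOpen_setOf_mem_opens x) ho ⟨A, hA, hxA⟩ hne⟩

end Opens

section OpensScott

variable {P : Type*} [Preorder P] [TopologicalSpace P] [IsScott P univ]
  [TopologicalSpace (Opens P)] [IsScott (Opens P) univ]

theorem _root_.IsIrreducible.opens_mem_of_countable {F : Set (Opens P)} (hF : IsIrreducible F)
    (hFc : IsClosed F) {W : Opens P} (hW : (W : Set P).Countable) (hWF : W ≤ sSup F) :
    W ∈ F := by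
  have hlow : IsLowerSet F := isLowerSet_of_isClosed hFc
  rcases (W : Set P).eq_empty_or_nonempty with hE | hne
  · obtain ⟨A, hA⟩ := hF.nonempty
    refine hlow (fun x hx ↦ ?_) hA
    exact (hE ▸ hx : x ∈ (∅ : Set P)).elim
  obtain ⟨w, hw⟩ := hW.exists_eq_range hne
  have hex (n : ℕ) : ∃ A ∈ F, w '' Iic n ⊆ (A : Set P) :=
    hF.exists_opens_superset ((finite_Iic n).image w)
      ((image_subset_range w _).trans (hw ▸ hWF))
  choose A hAF hA using hex
  have hmem {k n : ℕ} (h : k ≤ n) : w k ∈ A n := hA n (mem_image_of_mem w h)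
  have hopen (m : ℕ) : IsOpen ((W : Set P) ∩ ⋂ n, (A (m + n) : Set P)) := by
    refine isOpen_inter_iInter_of_finite W.isOpen (fun n ↦ (A (m + n)).isOpen) fun x hx ↦ ?_
    rw [hw] at hx
    obtain ⟨k, rfl⟩ := hx
    exact (finite_lt_nat k).subset fun n hn ↦ by
      by_contra hkn
      exact hn (hmem ((not_lt.1 hkn).trans (Nat.le_add_left n m)))
  let B (m : ℕ) : Opens P := ⟨_, hopen m⟩
  have hBmono : Monotone B := fun m m' hm x hx ↦ ⟨hx.1, mem_iInter.2 fun n ↦ by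
    have := mem_iInter.1 hx.2 (m' - m + n)
    rwa [← add_assoc, Nat.add_sub_cancel' hm] at this⟩
  have hBF : range B ⊆ F := by
    rintro _ ⟨m, rfl⟩
    exact hlow (fun x hx ↦ mem_iInter.1 hx.2 0) (hAF (m + 0))
  refine dirSupClosed_of_isClosed hFc hBF (range_nonempty B)
    (directedOn_range.2 hBmono.directed_le) ⟨?_, fun V hV x hx ↦ ?_⟩
  · rintro _ ⟨m, rfl⟩ x hx
    exact hx.1
  · obtain ⟨k, rfl⟩ : x ∈ range w := hw ▸ hx
    exact hV (mem_range_self k) ⟨hx, mem_iInter.2 fun n ↦ hmem (Nat.le_add_right k n)⟩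

theorem _root_.IsIrreducible.opens_sSup_mem (hP : OmegaTypeSpace P) {F : Set (Opens P)}
    (hF : IsIrreducible F) (hFc : IsClosed F) : sSup F ∈ F := by
  by_cases htop : ⊤ ∈ F
  · rwa [top_le_iff.1 (le_sSup htop)]
  refine dirSupClosed_of_isClosed hFc
    (d := {W : Opens P | (W : Set P).Countable ∧ W ≤ sSup F})
    (fun W hW ↦ hF.opens_mem_of_countable hFc hW.1 hW.2) ⟨⊥, by simp⟩ ?_
    ⟨fun W hW ↦ hW.2, fun V hV x hx ↦ ?_⟩
  · intro U hU V hV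
    refine ⟨U ⊔ V, ⟨?_, sup_le hU.2 hV.2⟩, le_sup_left, le_sup_right⟩
    simpa using ⟨hU.1, hV.1⟩
  · rcases hP.exists_countable_or_eq_top x with ⟨U, hxU, hU⟩ | h
    · exact hV (a := U ⊓ sSup F) ⟨hU.mono fun y hy ↦ hy.1, inf_le_right⟩ ⟨hxU, hx⟩
    · obtain ⟨A, hA, hxA⟩ := Opens.mem_sSup.1 hx
      exact (htop (h A hxA ▸ hA)).elim

end OpensScott

end Topology.IsScott

/-- Let P be a poset such that ΣP is an ω type space. Then the complete
lattice σ(P) of Scott-open subsets of P (here `Opens P` with P carrying its Scott topology),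
equipped with the Scott topology, is sober. -/
theorem stmt14 {P : Type*} [PartialOrder P]
    [TopologicalSpace P] [Topology.IsScott P Set.univ]
    (hP : OmegaTypeSpace P) :
    ScottSober (TopologicalSpace.Opens P) := by
  let : TopologicalSpace (Opens P) := scott (Opens P) univ
  have : IsScott (Opens P) univ := ⟨rfl⟩
  refine ⟨inferInstance, ⟨fun {F} hF hFc ↦ ⟨sSup F, ?_⟩⟩⟩
  rw [IsGenericPoint, IsScott.closure_singleton]
  exact Subset.antisymm
    (fun U hU ↦ IsScott.isLowerSet_of_isClosed hFc hU (hF.opens_sSup_mem hP hFc))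
    fun U hU ↦ le_sSup hU
end

section
/- Let P be a countable poset. Then the complete lattice σ(P) of Scott-open subsets of P, equipped with the Scott topology, is first-countable. -/
open TopologicalSpace Topology Set

/-- An intersection of Scott-open sets `V k ⊆ U`, such that every point of `U` lies in all but
finitely many of them, is Scott-open. -/
theorem isOpen_iInter_of_eventually_mem {P : Type*} [PartialOrder P] [TopologicalSpace P]
    [IsScott P univ] {U : Set P} {V : ℕ → Set P} (hV : ∀ k, IsOpen (V k)) (hVU : ∀ k, V k ⊆ U)
    (hev : ∀ p ∈ U, ∀ᶠ k in Filter.atTop, p ∈ V k) : IsOpen (⋂ k, V k) := by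
  simp only [IsScott.isOpen_iff_isUpperSet_and_dirSupInaccOn (D := univ)] at hV ⊢
  refine ⟨isUpperSet_iInter fun k => (hV k).1, fun d _ hne hd a ha haV => ?_⟩
  rw [mem_iInter] at haV
  have hmeet (k : ℕ) : (d ∩ V k).Nonempty := (hV k).2 (mem_univ d) hne hd ha (haV k)
  obtain ⟨e, hed, heV⟩ := hmeet 0
  obtain ⟨j, hj⟩ := Filter.eventually_atTop.1 (hev e (hVU 0 heV))
  have hfin (m : ℕ) : ∃ x ∈ d, e ≤ x ∧ ∀ k < m, x ∈ V k := by
    induction m with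
    | zero => exact ⟨e, hed, le_rfl, by simp⟩
    | succ m ih =>
      obtain ⟨x, hxd, hex, hx⟩ := ih
      obtain ⟨y, hyd, hy⟩ := hmeet m
      obtain ⟨z, hzd, hxz, hyz⟩ := hd x hxd y hyd
      refine ⟨z, hzd, hex.trans hxz, fun k hk => ?_⟩
      rcases Nat.lt_succ_iff_lt_or_eq.1 hk with hk | rfl
      · exact (hV k).1 hxz (hx k hk)
      · exact (hV k).1 hyz hy
  obtain ⟨x, hxd, hex, hx⟩ := hfin j
  refine ⟨x, hxd, mem_iInter.2 fun k => ?_⟩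
  rcases lt_or_ge k j with hk | hk
  · exact hx k hk
  · exact (hV k).1 hex (hj k hk)

/-- If every point of `U` lies in all but finitely many of the Scott-open sets `V n`, then every
Scott-open family containing `U` contains some `V n`. -/
theorem exists_mem_of_eventually_mem {P : Type*} [PartialOrder P] [TopologicalSpace P]
    [IsScott P univ] [TopologicalSpace (Opens P)] [IsScott (Opens P) univ] {𝒱 : Set (Opens P)}
    (h𝒱 : IsOpen 𝒱) {U : Opens P} (hU : U ∈ 𝒱) {V : ℕ → Opens P}
    (hev : ∀ p ∈ U, ∀ᶠ k in Filter.atTop, p ∈ V k) : ∃ n, V n ∈ 𝒱 := by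
  rw [IsScott.isOpen_iff_isUpperSet_and_dirSupInaccOn (D := univ)] at h𝒱
  let W (n : ℕ) : Opens P := ⟨⋂ k, (V (n + k) ⊓ U : Opens P),
    isOpen_iInter_of_eventually_mem (U := U) (fun k => (V (n + k) ⊓ U).isOpen)
      (fun k => inter_subset_right) fun p hp => by
        filter_upwards [(Filter.tendsto_add_atTop_nat n).eventually (hev p hp)] with k hk
        exact ⟨by rwa [add_comm], hp⟩⟩
  have mem_W {n : ℕ} {p : P} : p ∈ W n ↔ ∀ k, p ∈ V (n + k) ∧ p ∈ U := mem_iInter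
  have hmono : Monotone W := monotone_nat_of_le_succ fun n p hp => mem_W.2 fun k => by
    simpa only [add_assoc, add_comm 1] using mem_W.1 hp (k + 1)
  have hlub : IsLUB (range W) U := by
    refine ⟨?_, fun T hT p hp => ?_⟩
    · rintro _ ⟨n, rfl⟩ p hp
      exact (mem_W.1 hp 0).2
    · obtain ⟨n, hn⟩ := Filter.eventually_atTop.1 (hev p hp)
      exact hT (mem_range_self n) (mem_W.2 fun k => ⟨hn _ (Nat.le_add_right n k), hp⟩)
  obtain ⟨_, ⟨n, rfl⟩, hn⟩ := h𝒱.2 (mem_univ _) (range_nonempty W)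
    (directedOn_range.2 hmono.directed_le) hlub hU
  exact ⟨n, h𝒱.1 (fun p hp => (mem_W.1 hp 0).1) hn⟩

/-- The open sets containing a fixed point form a Scott-open family. -/
theorem isOpen_setOf_mem_opens {P : Type*} [TopologicalSpace P] [TopologicalSpace (Opens P)]
    [IsScott (Opens P) univ] (p : P) : IsOpen {V : Opens P | p ∈ V} := by
  rw [IsScott.isOpen_iff_isUpperSet_and_dirSupInaccOn (D := univ)]
  refine ⟨fun V W hVW hp => hVW hp, fun d _ _ _ a ha hpa => ?_⟩
  rw [mem_ofPred_eq, ← ha.sSup_eq, Opens.mem_sSup] at hpa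
  exact hpa

/-- Let P be a countable poset. Then the complete lattice σ(P) of Scott-open
subsets of P (here `Opens P` with P carrying its Scott topology), equipped with the Scott
topology, is first-countable. -/
theorem stmt15 {P : Type*} [PartialOrder P] [Countable P]
    [TopologicalSpace P] [Topology.IsScott P Set.univ] :
    @FirstCountableTopology (TopologicalSpace.Opens P)
      (Topology.scott (TopologicalSpace.Opens P) Set.univ) := by
  let _ : TopologicalSpace (Opens P) := scott (Opens P) univ
  have : IsScott (Opens P) univ := ⟨rfl⟩
  obtain ⟨e, he⟩ := exists_injective_nat P
  refine ⟨fun U => ?_⟩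
  let N (n : ℕ) : Set (Opens P) := ⋂ p ∈ {p | p ∈ U ∧ e p ≤ n}, {V | p ∈ V}
  have hN (n : ℕ) : IsOpen (N n) :=
    (((finite_Iic n).preimage he.injOn).subset fun p hp => hp.2).isOpen_biInter
      fun p _ => isOpen_setOf_mem_opens p
  have hUN (n : ℕ) : U ∈ N n := mem_iInter₂.2 fun p hp => hp.1
  have hbasis : (𝓝 U).HasBasis (fun _ : ℕ => True) N := by
    refine ⟨fun s => ⟨fun hs => ?_, fun ⟨n, _, hn⟩ =>
      Filter.mem_of_superset ((hN n).mem_nhds (hUN n)) hn⟩⟩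
    obtain ⟨𝒱, h𝒱s, h𝒱, hU⟩ := mem_nhds_iff.1 hs
    by_contra! hcon
    choose V hVN hVs using fun n => not_subset.1 (hcon n trivial)
    obtain ⟨n, hn⟩ := exists_mem_of_eventually_mem h𝒱 hU (V := V) fun p hp =>
      Filter.eventually_atTop.2 ⟨e p, fun k hk => mem_iInter₂.1 (hVN k) p ⟨hp, hk⟩⟩
    exact hVs n (h𝒱s hn)
  exact hbasis.isCountablyGenerated
end

section
/- Let X be a consonant Wilker space. Then the lattice 𝒪(X) of open subsets of X, equipped with the Scott topology, is sober. -/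
/-- A space is a Wilker space if whenever a compact set K is covered by two open sets U₁, U₂,
there are compact sets K₁ ⊆ U₁ and K₂ ⊆ U₂ with K ⊆ K₁ ∪ K₂. -/
def WilkerSpace (X : Type*) [TopologicalSpace X] : Prop :=
  ∀ U₁ U₂ K : Set X, IsOpen U₁ → IsOpen U₂ → IsCompact K → K ⊆ U₁ ∪ U₂ →
    ∃ K₁ K₂ : Set X, IsCompact K₁ ∧ IsCompact K₂ ∧ K₁ ⊆ U₁ ∧ K₂ ⊆ U₂ ∧ K ⊆ K₁ ∪ K₂

/-- A space is consonant if for every Scott-open family 𝓕 of open sets and every U ∈ 𝓕 there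
is a compact saturated set Q with U ∈ Φ(Q) ⊆ 𝓕, where Φ(Q) = {V open | Q ⊆ V}. -/
def Consonant (X : Type*) [TopologicalSpace X] : Prop :=
  ∀ 𝓕 : Set (TopologicalSpace.Opens X),
    @IsOpen (TopologicalSpace.Opens X) (Topology.scott (TopologicalSpace.Opens X) Set.univ) 𝓕 →
    ∀ U ∈ 𝓕, ∃ Q : Set X, IsCompact Q ∧ IsSaturatedSet Q ∧ Q ⊆ (U : Set X) ∧
      {V : TopologicalSpace.Opens X | Q ⊆ (V : Set X)} ⊆ 𝓕

open TopologicalSpace Topology in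
/-- The family of open sets containing a fixed compact set is Scott open. -/
theorem IsCompact.isOpen_scott_setOf_subset {X : Type*} [TopologicalSpace X] {K : Set X}
    (hK : IsCompact K) :
    IsOpen[Topology.scott (Opens X) Set.univ] {V : Opens X | K ⊆ (V : Set X)} := by
  let : TopologicalSpace (Opens X) := Topology.scott (Opens X) Set.univ
  have : Topology.IsScott (Opens X) Set.univ := ⟨rfl⟩
  refine (Topology.IsScott.isOpen_iff_isUpperSet_and_dirSupInaccOn (D := Set.univ)).2
    ⟨fun U V hUV hU => Set.Subset.trans hU hUV, fun d _ hne hdir U hU hKU => ?_⟩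
  have : Nonempty d := hne.to_subtype
  obtain ⟨V, hV⟩ := hK.elim_directed_cover (fun V : d => ((V : Opens X) : Set X))
    (fun V => V.1.isOpen)
    (fun x hx => by
      have hxU : x ∈ U := hKU hx
      rw [← hU.sSup_eq, Opens.mem_sSup] at hxU
      obtain ⟨V, hVd, hxV⟩ := hxU
      exact Set.mem_iUnion.2 ⟨⟨V, hVd⟩, hxV⟩)
    (directedOn_iff_directed.1 hdir)
  exact ⟨V, V.2, hV⟩

open TopologicalSpace Topology in
/-- In a consonant Wilker space, Scott-closed irreducible families of open sets are closed under
binary unions. -/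
theorem Consonant.sup_mem_of_isIrreducible {X : Type*} [TopologicalSpace X]
    (hcons : Consonant X) (hwilker : WilkerSpace X) {A : Set (Opens X)}
    (hirr : @IsIrreducible _ (Topology.scott (Opens X) Set.univ) A)
    (hclosed : IsClosed[Topology.scott (Opens X) Set.univ] A) {U₁ U₂ : Opens X}
    (hU₁ : U₁ ∈ A) (hU₂ : U₂ ∈ A) : U₁ ⊔ U₂ ∈ A := by
  by_contra hsup
  obtain ⟨Q, hQ, -, hQU, hQA⟩ := hcons Aᶜ hclosed.isOpen_compl (U₁ ⊔ U₂) hsup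
  obtain ⟨K₁, K₂, hK₁, hK₂, hKU₁, hKU₂, hQK⟩ :=
    hwilker U₁ U₂ Q U₁.isOpen U₂.isOpen hQ (by simpa using hQU)
  obtain ⟨V, hVA, hV₁, hV₂⟩ := hirr.2 _ _ hK₁.isOpen_scott_setOf_subset
    hK₂.isOpen_scott_setOf_subset ⟨U₁, hU₁, hKU₁⟩ ⟨U₂, hU₂, hKU₂⟩
  exact hQA (hQK.trans (Set.union_subset hV₁ hV₂)) hVA

/-- Let X be a consonant Wilker space. Then the lattice 𝒪(X) of open subsets
of X, equipped with the Scott topology, is sober. -/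
theorem stmt16 {X : Type*} [TopologicalSpace X]
    (hcons : Consonant X) (hwilker : WilkerSpace X) :
    ScottSober (TopologicalSpace.Opens X) := by
  let : TopologicalSpace (TopologicalSpace.Opens X) :=
    Topology.scott (TopologicalSpace.Opens X) Set.univ
  have : Topology.IsScott (TopologicalSpace.Opens X) Set.univ := ⟨rfl⟩
  refine ⟨inferInstance, ⟨fun {A} hirr hclosed => ⟨sSup A, ?_⟩⟩⟩
  have hdir : DirectedOn (· ≤ ·) A := fun U hU V hV =>
    ⟨U ⊔ V, hcons.sup_mem_of_isIrreducible hwilker hirr hclosed hU hV, le_sup_left, le_sup_right⟩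
  have hmem : sSup A ∈ A := Topology.IsScott.dirSupClosed_of_isClosed hclosed
    Set.Subset.rfl hirr.nonempty hdir (isLUB_sSup A)
  rw [IsGenericPoint, Topology.IsScott.closure_singleton]
  exact Set.Subset.antisymm
    ((Topology.IsScott.isLowerSet_of_isClosed hclosed).Iic_subset hmem) fun U hU => le_sSup hU
end

section
/- Let P and Q be posets. If ΣP and ΣQ are first-countable, then the Scott topology on the product poset P × Q coincides with the product topology of ΣP and ΣQ. -/
open Set Filter Topology

/-- If `W` is Scott open in a product poset and `K` is compact in the second factor, then the
set of points `x` with `{x} × K ⊆ W` is Scott open. -/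
theorem isOpen_setOf_forall_mem_of_isUpperSet_of_dirSupInacc {P Q : Type*}
    [PartialOrder P] [PartialOrder Q]
    [TopologicalSpace P] [Topology.IsScott P Set.univ]
    [TopologicalSpace Q] [Topology.IsScott Q Set.univ]
    {W : Set (P × Q)} (hW : IsUpperSet W) (hW' : DirSupInaccOn univ W)
    (hQ : ∀ x : P, IsOpen {y : Q | (x, y) ∈ W}) {K : Set Q} (hK : IsCompact K) :
    IsOpen {x : P | ∀ y ∈ K, (x, y) ∈ W} := by
  rw [IsScott.isOpen_iff_isUpperSet_and_dirSupInaccOn (D := univ)]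
  refine ⟨fun x x' hx h y hy ↦ hW (Prod.mk_le_mk.2 ⟨hx, le_rfl⟩) (h y hy), ?_⟩
  intro D _ hne hdir d hd hdK
  have : Nonempty D := hne.to_subtype
  have hcover : K ⊆ ⋃ e : D, {y : Q | ((e : P), y) ∈ W} := by
    intro y hy
    obtain ⟨_, ⟨e, he, rfl⟩, hz⟩ := hW' (mem_univ ((fun x ↦ (x, y)) '' D)) (hne.image _)
      (hdir.mono_comp (fun _ _ h ↦ Prod.mk_le_mk.2 ⟨h, le_rfl⟩))
      (isLUB_prod.2 ⟨by simpa [image_image] using hd,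
        by simp [image_image, hne.image_const]⟩) (hdK y hy)
    exact mem_iUnion.2 ⟨⟨e, he⟩, hz⟩
  have hdirected : Directed (· ⊆ ·) fun e : D ↦ {y : Q | ((e : P), y) ∈ W} := by
    intro e f
    obtain ⟨g, hg, heg, hfg⟩ := hdir e e.2 f f.2
    exact ⟨⟨g, hg⟩, fun y hy ↦ hW (Prod.mk_le_mk.2 ⟨heg, le_rfl⟩) hy,
      fun y hy ↦ hW (Prod.mk_le_mk.2 ⟨hfg, le_rfl⟩) hy⟩
  obtain ⟨e, he⟩ := hK.elim_directed_cover _ (fun e : D ↦ hQ e) hcover hdirected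
  exact ⟨e, e.2, fun y hy ↦ he hy⟩

/-- The sections of a Scott open subset of a product poset are Scott open. -/
theorem isOpen_setOf_mk_mem_of_isUpperSet_of_dirSupInacc {P Q : Type*}
    [PartialOrder P] [PartialOrder Q] [TopologicalSpace Q] [Topology.IsScott Q Set.univ]
    {W : Set (P × Q)} (hW : IsUpperSet W) (hW' : DirSupInaccOn univ W) (x : P) :
    IsOpen {y : Q | (x, y) ∈ W} := by
  rw [IsScott.isOpen_iff_isUpperSet_and_dirSupInaccOn (D := univ)]
  refine ⟨fun y y' hy h ↦ hW (Prod.mk_le_mk.2 ⟨le_rfl, hy⟩) h, ?_⟩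
  intro D _ hne hdir d hd hdW
  obtain ⟨_, ⟨e, he, rfl⟩, hz⟩ := hW' (mem_univ ((fun y ↦ (x, y)) '' D)) (hne.image _)
    (hdir.mono_comp (fun _ _ h ↦ Prod.mk_le_mk.2 ⟨le_rfl, h⟩))
    (isLUB_prod.2 ⟨by simp [image_image, hne.image_const],
      by simpa [image_image] using hd⟩) hdW
  exact ⟨e, he, hz⟩

/-- The product of the Scott topologies is coarser than the Scott topology of the product. -/
theorem IsOpen.isUpperSet_and_dirSupInaccOn_prod {P Q : Type*}
    [PartialOrder P] [PartialOrder Q]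
    [TopologicalSpace P] [Topology.IsScott P Set.univ]
    [TopologicalSpace Q] [Topology.IsScott Q Set.univ]
    {W : Set (P × Q)} (hW : IsOpen W) : IsUpperSet W ∧ DirSupInaccOn univ W := by
  rw [isOpen_prod_iff] at hW
  have hup : IsUpperSet W := by
    rintro ⟨a, b⟩ ⟨a', b'⟩ h hab
    obtain ⟨U, V, hU, hV, ha, hb, hUV⟩ := hW a b hab
    exact hUV ⟨IsScott.isUpperSet_of_isOpen (D := univ) hU h.1 ha,
      IsScott.isUpperSet_of_isOpen (D := univ) hV h.2 hb⟩
  refine ⟨hup, ?_⟩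
  rintro D - hne hdir ⟨a, b⟩ hd hab
  obtain ⟨U, V, hU, hV, ha, hb, hUV⟩ := hW a b hab
  rw [IsScott.isOpen_iff_isUpperSet_and_dirSupInaccOn (D := univ)] at hU hV
  rw [isLUB_prod] at hd
  obtain ⟨_, ⟨p, hp, rfl⟩, hpU⟩ := hU.2 (mem_univ _) (hne.image _)
    (hdir.mono_comp (fun _ _ h ↦ h.1)) hd.1 ha
  obtain ⟨_, ⟨q, hq, rfl⟩, hqV⟩ := hV.2 (mem_univ _) (hne.image _)
    (hdir.mono_comp (fun _ _ h ↦ h.2)) hd.2 hb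
  obtain ⟨r, hr, hpr, hqr⟩ := hdir p hp q hq
  exact ⟨r, hr, hUV ⟨hU.1 hpr.1 hpU, hV.1 hqr.2 hqV⟩⟩

/-- With first-countable factors, Scott open subsets of the product poset are open in the
product topology. -/
theorem isOpen_prod_of_isUpperSet_of_dirSupInaccOn {P Q : Type*}
    [PartialOrder P] [PartialOrder Q]
    [TopologicalSpace P] [Topology.IsScott P Set.univ]
    [TopologicalSpace Q] [Topology.IsScott Q Set.univ]
    [FirstCountableTopology P] [FirstCountableTopology Q]
    {W : Set (P × Q)} (hW : IsUpperSet W) (hW' : DirSupInaccOn univ W) : IsOpen W := by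
  have hQ := isOpen_setOf_mk_mem_of_isUpperSet_of_dirSupInacc hW hW'
  rw [isOpen_iff_mem_nhds]
  rintro ⟨a, b⟩ hab
  by_contra hnot
  obtain ⟨u, hu, huW⟩ := exists_seq_forall_of_frequently
    (show ∃ᶠ z in 𝓝 (a, b), z ∉ W from fun h ↦ hnot (by simpa using h))
  rw [nhds_prod_eq, tendsto_prod_iff'] at hu
  obtain ⟨N, hN⟩ := eventually_atTop.1 (hu.2.eventually ((hQ a).mem_nhds hab))
  have hK := ((tendsto_add_atTop_iff_nat N).2 hu.2).isCompact_insert_range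
  have hU := isOpen_setOf_forall_mem_of_isUpperSet_of_dirSupInacc hW hW' hQ hK
  have ha : ∀ y ∈ insert b (range fun n ↦ (u (n + N)).2), (a, y) ∈ W := by
    rintro y (rfl | ⟨n, rfl⟩)
    · exact hab
    · exact hN _ (Nat.le_add_left N n)
  obtain ⟨n, hn⟩ := (((tendsto_add_atTop_iff_nat N).2 hu.1).eventually (hU.mem_nhds ha)).exists
  exact huW (n + N) (hn _ (mem_insert_of_mem _ ⟨n, rfl⟩))


/-- Let P and Q be posets. If ΣP and ΣQ are first-countable, then the Scott
topology on the product poset P × Q coincides with the product topology of ΣP and ΣQ. -/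
theorem stmt18 {P Q : Type*} [PartialOrder P] [PartialOrder Q]
    [TopologicalSpace P] [Topology.IsScott P Set.univ]
    [TopologicalSpace Q] [Topology.IsScott Q Set.univ]
    [FirstCountableTopology P] [FirstCountableTopology Q] :
    Topology.IsScott (P × Q) Set.univ := by
  refine ⟨TopologicalSpace.ext_iff.2 fun W ↦ ?_⟩
  rw [@IsScott.isOpen_iff_isUpperSet_and_dirSupInaccOn (P × Q) univ _ (scott _ _) W
    (@IsScott.mk _ _ _ (scott _ _) rfl)]
  exact ⟨fun h ↦ h.isUpperSet_and_dirSupInaccOn_prod,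
    fun h ↦ isOpen_prod_of_isUpperSet_of_dirSupInaccOn h.1 h.2⟩
end
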